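/- arXiv:2508.03479 — 2 statements merged into one kernel-verified Lean document; each statement's English description precedes it below -/
import Mathlib

section
/- For every real ε > 0 there exists N such that the following holds: for every prime r, every power q = r^f of r, and every n ≥ 2, if G = PSL_n(q) satisfies |G| ≥ N, then Σ_p Q_p(G) < ε, where the sum is over all prime divisors p of |G| with p ≠ 2 and p ≠ r. -/
open Matrix

/-!
If `y` in `G = SLₙ(q)` fuses a non-central `b` of the Sylow `p`-subgroup `P` to `c = y⁻¹by ∈ P`,
then `y` lies in the space of intertwiners of `c` and `b`, whose dimension over `𝔽_q` is that of
the centralizer of `c`. As `p ∤ q`, `c` is diagonalizable over the algebraic closure, so that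
dimension is the number of pairs of coinciding eigenvalues. Unless all eigenvalues but one
coincide, this number is at most `n² - 2n - max(0, 2n - 8)`. With the crude bound `|P|²` on the
number of pairs `(c, b)` this is good enough, because `|P|² ≤ (7/2)ⁿ q²ⁿ⁻²`.

In the exceptional case `c` and `b` are affine functions of rank one projections. The projections
of this kind arising from a `p`-group with `p ≠ 2` commute and are pairwise orthogonal, so there
are at most `n` of them, which leaves `n²` intertwiner spaces of dimension `(n - 1)² + 1`.

Hence `Q_p(G) = O((7/8)ⁿ / q)`. As `|G|` has `O(n² log q)` prime divisors, the sum tends to `0`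
as `(n, q)` leaves every finite set.
-/

section Groups

open scoped commutatorElement

variable {G : Type*} [Group G]

theorem exists_commutatorElement_mem_center_ne_one [Group.IsNilpotent G]
    (h : ∃ b c : G, b * c ≠ c * b) :
    ∃ a a' : G, ⁅a, a'⁆ ∈ Subgroup.center G ∧ ⁅a, a'⁆ ≠ 1 := by
  have hquot : Nontrivial (G ⧸ Subgroup.center G) := by
    rw [QuotientGroup.nontrivial_iff]
    intro htop
    obtain ⟨b, c, hbc⟩ := h
    exact hbc (Subgroup.mem_center_iff.1 (htop ▸ Subgroup.mem_top c) b)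
  obtain ⟨x, hx, hx1⟩ := (Subgroup.nontrivial_iff_exists_ne_one _).1
    ((Subgroup.nontrivial_iff_ne_bot _).2
      (Group.IsNilpotent.center_ne_bot (G := G ⧸ Subgroup.center G)))
  obtain ⟨a, rfl⟩ := QuotientGroup.mk_surjective x
  have ha : a ∉ Subgroup.center G := fun hac => hx1 ((QuotientGroup.eq_one_iff a).2 hac)
  obtain ⟨a', ha'⟩ : ∃ a', a' * a ≠ a * a' := by
    simpa only [Subgroup.mem_center_iff, not_forall] using ha
  refine ⟨a, a', ?_, fun h1 => ha' (commutatorElement_eq_one_iff_mul_comm.1 h1).symm⟩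
  rw [← QuotientGroup.eq_one_iff]
  exact commutatorElement_eq_one_iff_mul_comm.2 (Subgroup.mem_center_iff.1 hx a').symm

/-- The elements `y` that conjugate some element of `P` outside `N` back into `P`. For `N = ⊥` they
are the `y` for which `P` meets its conjugate `P ^ y` nontrivially; taking `N` central makes the
notion compatible with the quotient by `N`. -/
def fusingSet (P N : Subgroup G) : Set G :=
  {y | ∃ b ∈ P, b ∉ N ∧ y⁻¹ * b * y ∈ P}

theorem setOf_inf_map_conj_inv_ne_bot (P : Subgroup G) :
    {x : G | P ⊓ P.map (MulAut.conj x⁻¹).toMonoidHom ≠ ⊥} = fusingSet P ⊥ := by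
  ext x
  simp only [Set.mem_ofPred_eq, fusingSet, Subgroup.mem_bot]
  rw [← Subgroup.nontrivial_iff_ne_bot, Subgroup.nontrivial_iff_exists_ne_one]
  constructor
  · rintro ⟨_, ⟨hP, b, hb, rfl⟩, hne⟩
    exact ⟨b, hb, fun h => hne (by simp [h]), by simpa using hP⟩
  · rintro ⟨b, hb, hb1, hP⟩
    refine ⟨x⁻¹ * b * x, ⟨hP, b, hb, by simp⟩, fun h => hb1 ?_⟩
    simpa [mul_assoc, inv_mul_eq_one, eq_comm] using h

theorem mem_sylow_of_mem_center {p : ℕ} [Finite G] [Fact p.Prime] (P : Sylow p G) {z : G}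
    (hz : z ∈ Subgroup.center G) {k : ℕ} (hk : z ^ p ^ k = 1) : z ∈ P := by
  have hnormal : (Subgroup.zpowers z).Normal :=
    ⟨fun w hw g => by
      rwa [Subgroup.mem_center_iff.1 (Subgroup.zpowers_le.2 hz hw) g, mul_inv_cancel_right]⟩
  have hpGroup : IsPGroup p (Subgroup.zpowers z) := by
    obtain ⟨j, -, hj⟩ := (Nat.dvd_prime_pow Fact.out).1 (orderOf_dvd_of_pow_eq_one hk)
    exact IsPGroup.of_card ((Nat.card_zpowers z).trans hj)
  exact hpGroup.le_sylow_of_normal P (Subgroup.mem_zpowers z)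

theorem preimage_mk_fusingSet_subset {p : ℕ} [Finite G] [Fact p.Prime] {N : Subgroup G} [N.Normal]
    (hN : N ≤ Subgroup.center G) (P : Sylow p G) :
    (QuotientGroup.mk : G → G ⧸ N) ⁻¹'
        fusingSet ((P : Subgroup G).map (QuotientGroup.mk' N)) ⊥ ⊆ fusingSet P N := by
  rintro y ⟨_, ⟨b, hb, rfl⟩, hb1, a, ha, hab⟩
  refine ⟨b, hb, fun hbN => hb1 ((QuotientGroup.eq_one_iff b).2 hbN), ?_⟩
  obtain ⟨z, hzN, hz⟩ : ∃ z ∈ N, y⁻¹ * b * y = a * z := by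
    refine ⟨a⁻¹ * (y⁻¹ * b * y), QuotientGroup.eq.1 hab, by group⟩
  have hzc := hN hzN
  obtain ⟨k, hk⟩ := P.isPGroup' ⟨a, ha⟩
  obtain ⟨l, hl⟩ := P.isPGroup' ⟨b, hb⟩
  have hak : a ^ p ^ (k + l) = 1 := by
    rw [pow_add, pow_mul, show a ^ p ^ k = 1 from congrArg Subtype.val hk, one_pow]
  have hbl : b ^ p ^ (k + l) = 1 := by
    rw [add_comm, pow_add, pow_mul, show b ^ p ^ l = 1 from congrArg Subtype.val hl, one_pow]
  have hzpow : z ^ p ^ (k + l) = 1 := by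
    have hconj : (y⁻¹ * b * y) ^ p ^ (k + l) = 1 := by
      simpa [hbl] using conj_pow (a := y⁻¹) (b := b) (i := p ^ (k + l))
    rwa [hz, Commute.mul_pow (Subgroup.mem_center_iff.1 hzc a), hak, one_mul] at hconj
  exact hz ▸ mul_mem ha (mem_sylow_of_mem_center P hzc hzpow)

theorem exists_sylow_ncard_fusingSet_quotient_le {p : ℕ} [Finite G] [Fact p.Prime]
    {N : Subgroup G} [N.Normal] (hN : N ≤ Subgroup.center G) (H : Sylow p (G ⧸ N)) :
    ∃ P : Sylow p G, ((fusingSet (H : Subgroup (G ⧸ N)) ⊥).ncard : ℝ) / Nat.card (G ⧸ N) ≤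
      (fusingSet (P : Subgroup G) N).ncard / Nat.card G := by
  obtain ⟨P, rfl⟩ := Sylow.mapSurjective_surjective (QuotientGroup.mk'_surjective N) p H
  refine ⟨P, ?_⟩
  have hcard := Nat.card_congr (QuotientGroup.preimageMkEquivSubgroupProdSet N
    (fusingSet ((P : Subgroup G).map (QuotientGroup.mk' N)) ⊥))
  rw [Nat.card_prod] at hcard
  have hle : Nat.card N * (fusingSet ((P : Subgroup G).map (QuotientGroup.mk' N)) ⊥).ncard ≤
      (fusingSet (P : Subgroup G) N).ncard :=
    hcard.symm.trans_le (Set.ncard_le_ncard (preimage_mk_fusingSet_subset hN P) (Set.toFinite _))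
  have hN0 : (0 : ℝ) < Nat.card N := by exact_mod_cast Nat.card_pos
  rw [Sylow.coe_mapSurjective, N.card_eq_card_quotient_mul_card_subgroup, Nat.cast_mul,
    ← mul_div_mul_right _ _ hN0.ne']
  gcongr
  rw [mul_comm]
  exact_mod_cast hle

end Groups

section Coincidences

variable {ι α : Type*} [Fintype ι]

open scoped Classical in
/-- The pairs of indices at which `D` takes equal values: the positions at which a matrix commuting
with `diagonal D` may be nonzero. -/
noncomputable def equalPairs (D : ι → α) : Finset (ι × ι) :=
  Finset.univ.filter fun ij => D ij.1 = D ij.2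

theorem mem_equalPairs {D : ι → α} {ij : ι × ι} : ij ∈ equalPairs D ↔ D ij.1 = D ij.2 := by
  simp only [equalPairs, Finset.mem_filter_univ]

open scoped Classical in
theorem card_equalPairs_le (D : ι → α) (i : ι) :
    (equalPairs D).card ≤ (Finset.univ.filter fun j => D j = D i).card ^ 2 +
      (Fintype.card ι - (Finset.univ.filter fun j => D j = D i).card) ^ 2 := by
  set S := Finset.univ.filter fun j => D j = D i with hS
  rw [← Finset.card_compl, sq, sq, ← Finset.card_product, ← Finset.card_product]
  refine (Finset.card_le_card fun jk hjk => ?_).trans (Finset.card_union_le (S ×ˢ S) (Sᶜ ×ˢ Sᶜ))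
  rw [mem_equalPairs] at hjk
  simp only [hS, Finset.mem_union, Finset.mem_product, Finset.mem_compl, Finset.mem_filter_univ,
    hjk]
  tauto

theorem card_equalPairs_of_injective {D : ι → α} (hD : Function.Injective D) :
    (equalPairs D).card = Fintype.card ι := by
  classical
  have hdiag : equalPairs D = Finset.univ.diag := by
    ext ij
    simp only [mem_equalPairs, hD.eq_iff, Finset.mem_diag, Finset.mem_univ, true_and]
  rw [hdiag, Finset.diag_card, Finset.card_univ]

theorem card_equalPairs_single_le {R : Type*} [Zero R] [One R] [NeZero (1 : R)] [DecidableEq ι]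
    (i : ι) : (equalPairs (Pi.single i (1 : R))).card ≤ (Fintype.card ι - 1) ^ 2 + 1 := by
  classical
  have hfiber : (Finset.univ.filter fun j => (Pi.single i 1 : ι → R) j =
      (Pi.single i 1 : ι → R) i) = {i} := by
    ext j
    by_cases hj : j = i <;> simp [hj]
  have hle := card_equalPairs_le (Pi.single i (1 : R)) i
  rwa [hfiber, Finset.card_singleton, one_pow, add_comm] at hle

open scoped Classical in
theorem card_fiber_add_two_le {D : ι → α} (hconst : ¬ ∀ i j, D i = D j)
    (hone : ¬ ∃ i₀ i₁, D i₀ ≠ D i₁ ∧ ∀ j ≠ i₀, D j = D i₁) (i : ι) :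
    (Finset.univ.filter fun j => D j = D i).card + 2 ≤ Fintype.card ι := by
  obtain ⟨j, hj⟩ : ∃ j, D j ≠ D i := by
    by_contra! hall
    exact hconst fun j k => (hall j).trans (hall k).symm
  obtain ⟨k, hkj, hk⟩ : ∃ k ≠ j, D k ≠ D i := by
    by_contra! hall
    exact hone ⟨j, i, hj, hall⟩
  rw [← Finset.card_add_card_compl (Finset.univ.filter fun j => D j = D i)]
  exact Nat.add_le_add_left (Finset.one_lt_card.2 ⟨k, by simpa, j, by simpa, hkj⟩) _

theorem card_equalPairs_trichotomy (D : ι → α) :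
    (∀ i j, D i = D j) ∨ (∃ i₀ i₁, D i₀ ≠ D i₁ ∧ ∀ j ≠ i₀, D j = D i₁) ∨
      (equalPairs D).card + 2 * Fintype.card ι + (2 * Fintype.card ι - 8) ≤
        Fintype.card ι ^ 2 := by
  classical
  refine or_iff_not_imp_left.2 fun hconst => or_iff_not_imp_left.2 fun hone => ?_
  have hfiber := card_fiber_add_two_le hconst hone
  by_cases hlarge : ∃ i, 2 ≤ (Finset.univ.filter fun j => D j = D i).card
  · obtain ⟨i, hi⟩ := hlarge
    have hle := card_equalPairs_le D i
    obtain ⟨a, ha⟩ := Nat.exists_eq_add_of_le hi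
    obtain ⟨b, hb⟩ := Nat.exists_eq_add_of_le (hfiber i)
    rw [ha] at hle hb
    rw [hb, show 2 + a + 2 + b - (2 + a) = 2 + b by omega] at hle
    rw [hb, show 2 * (2 + a + 2 + b) - 8 = 2 * (a + b) by omega]
    nlinarith
  · push Not at hlarge
    have hinj : Function.Injective D := fun j k hjk =>
      Finset.card_le_one.1 (Nat.lt_succ_iff.1 (hlarge k)) j (by simp [hjk]) k (by simp)
    rw [card_equalPairs_of_injective hinj]
    obtain ⟨i, -⟩ := not_forall.1 hconst
    have hpos : 0 < (Finset.univ.filter fun j => D j = D i).card := Finset.card_pos.2 ⟨i, by simp⟩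
    have hn := hfiber i
    rcases Nat.lt_or_ge (Fintype.card ι) 4 with h4 | h4
    · rw [show Fintype.card ι = 3 by omega]
      norm_num
    · zify [show 8 ≤ 2 * Fintype.card ι by omega]
      nlinarith

end Coincidences

section Diagonalization

variable {ι K : Type*} [Fintype ι] [DecidableEq ι] [Field K]

theorem isConj_diagonal_of_basis {A : Matrix ι ι K} (b : Module.Basis ι K (ι → K)) {D : ι → K}
    (hb : ∀ i, A *ᵥ b i = D i • b i) : IsConj (diagonal D) A := by
  let e := Pi.basisFun K ι
  refine ⟨⟨e.toMatrix b, b.toMatrix e, e.toMatrix_mul_toMatrix_flip b,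
    b.toMatrix_mul_toMatrix_flip e⟩, ?_⟩
  ext i j
  have hcol : (A * e.toMatrix b) i j = (A *ᵥ b j) i := by
    simp [e, Matrix.mul_apply, mulVec, dotProduct, Module.Basis.toMatrix_apply]
  change (e.toMatrix b * diagonal D) i j = (A * e.toMatrix b) i j
  rw [hcol, hb, mul_diagonal]
  simp [e, Module.Basis.toMatrix_apply, mul_comm]

theorem exists_isConj_diagonal_of_pow_eq_one [IsAlgClosed K] {A : Matrix ι ι K} {N : ℕ}
    (hN : (N : K) ≠ 0) (hA : A ^ N = 1) : ∃ D : ι → K, IsConj (diagonal D) A := by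
  classical
  let f : Module.End K (ι → K) := toLin' A
  have hsemisimple : f.IsSemisimple := by
    have hsep : (Polynomial.X ^ N - 1 : Polynomial K).Separable := by
      simpa using Polynomial.separable_X_pow_sub_C (F := K) 1 hN one_ne_zero
    have hf : f ^ N = 1 := by
      rw [← toLin'_pow, hA, toLin'_one, Module.End.one_eq_id]
    exact Module.End.isSemisimple_of_squarefree_aeval_eq_zero hsep.squarefree (by simp [hf])
  have hinternal : DirectSum.IsInternal fun μ : K => f.eigenspace μ :=
    (DirectSum.isInternal_submodule_iff_iSupIndep_and_iSup_eq_top _).2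
      ⟨f.eigenspaces_iSupIndep, hsemisimple.iSup_eigenspace_eq_top⟩
  let b := hinternal.collectedBasis fun μ => Module.finBasis K (f.eigenspace μ)
  let e := b.indexEquiv (Pi.basisFun K ι)
  refine ⟨fun i => (e.symm i).1, isConj_diagonal_of_basis (b.reindex e) fun i => ?_⟩
  have hmem : b.reindex e i ∈ f.eigenspace (e.symm i).1 := by simp [b]
  exact Module.End.mem_eigenspace_iff.1 hmem

theorem eq_zero_of_commute_diagonal {D : ι → K} {X : Matrix ι ι K} (hX : Commute (diagonal D) X)
    (hzero : ∀ ij ∈ equalPairs D, X ij.1 ij.2 = 0) : X = 0 := by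
  ext i j
  by_cases hij : D i = D j
  · exact hzero (i, j) (mem_equalPairs.2 hij)
  · have hentry : D i * X i j = X i j * D j := by
      simpa only [diagonal_mul, mul_diagonal] using congrFun₂ hX.eq i j
    have hprod : X i j * (D i - D j) = 0 := by rw [mul_sub, mul_comm, hentry, sub_self]
    exact (mul_eq_zero.1 hprod).resolve_right (sub_ne_zero.2 hij)

theorem finrank_centralizer_le_of_isConj {A : Matrix ι ι K} {D : ι → K}
    (h : IsConj (diagonal D) A) :
    Module.finrank K (Subalgebra.centralizer K {A}) ≤ (equalPairs D).card := by
  obtain ⟨c, hc⟩ := h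
  let φ : Subalgebra.centralizer K {A} →ₗ[K] (equalPairs D → K) :=
    LinearMap.pi (fun ij : equalPairs D => entryLinearMap K K ij.1.1 ij.1.2) ∘ₗ
      LinearMap.mulLeft K (↑c⁻¹ : Matrix ι ι K) ∘ₗ LinearMap.mulRight K (c : Matrix ι ι K) ∘ₗ
        (Subalgebra.centralizer K {A}).val.toLinearMap
  have hφ : Function.Injective φ := by
    refine (injective_iff_map_eq_zero φ).2 fun X hX => Subtype.ext ?_
    have hAX : Commute A X.1 := (Subalgebra.mem_centralizer_iff K).1 X.2 A rfl
    have hDX : Commute ((↑c⁻¹ : Matrix ι ι K) * (X.1 * (c : Matrix ι ι K))) (diagonal D) :=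
      SemiconjBy.mul_left hc.units_inv_symm_left (SemiconjBy.mul_left hAX.symm hc)
    have hzero := eq_zero_of_commute_diagonal hDX.symm fun ij hij => congrFun hX ⟨ij, hij⟩
    rwa [c⁻¹.mul_right_eq_zero, c.mul_left_eq_zero] at hzero
  simpa using LinearMap.finrank_le_finrank_of_injective hφ

end Diagonalization

section Descent

variable {ι F K : Type*} [Field F] [Field K] [Algebra F K]

theorem finrank_le_finrank_of_map_mem [Finite ι] {W : Submodule F (Matrix ι ι F)}
    {C : Submodule K (Matrix ι ι K)} (h : ∀ X ∈ W, X.map (algebraMap F K) ∈ C) :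
    Module.finrank F W ≤ Module.finrank K C := by
  let w := Module.finBasis F W
  have hF : LinearIndependent F
      fun i => (LinearEquiv.curry F F ι ι).symm (w i : Matrix ι ι F) :=
    (w.linearIndependent.map' W.subtype W.ker_subtype).map'
      (LinearEquiv.curry F F ι ι).symm.toLinearMap (LinearEquiv.ker _)
  have hK : LinearIndependent K fun i => (w i : Matrix ι ι F).map (algebraMap F K) :=
    ((linearIndependent_algebraMap_comp_iff (S := K)).2 hF).map'
      (LinearEquiv.curry K K ι ι).toLinearMap (LinearEquiv.ker _)
  have hC : LinearIndependent K
      fun i => (⟨(w i : Matrix ι ι F).map (algebraMap F K), h _ (w i).2⟩ : C) :=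
    LinearIndependent.of_comp C.subtype hK
  simpa using hC.fintype_card_le_finrank

variable [Fintype ι] [DecidableEq ι]

/-- The elements `y` of the special linear group over `F` with `y * A = A' * y`, where `A` and `A'`
may have entries in an extension `K` of `F`. -/
def intertwiners (F : Type*) [Field F] [Algebra F K] (A A' : Matrix ι ι K) :
    Set (SpecialLinearGroup ι F) :=
  {y | SemiconjBy (SpecialLinearGroup.map (algebraMap F K) y : Matrix ι ι K) A A'}

theorem ncard_intertwiners_self_le [Finite F] {A : Matrix ι ι K} {D : ι → K}
    (hA : IsConj (diagonal D) A) :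
    (intertwiners F A A).ncard ≤ Nat.card F ^ (equalPairs D).card := by
  let W : Submodule F (Matrix ι ι F) :=
    ((Subalgebra.centralizer K {A}).restrictScalars F).toSubmodule.comap
      (Algebra.ofId F K).mapMatrix.toLinearMap
  have hfinrank : Module.finrank F W ≤ (equalPairs D).card :=
    (finrank_le_finrank_of_map_mem (W := W) (C := (Subalgebra.centralizer K {A}).toSubmodule)
      fun X hX => hX).trans (finrank_centralizer_le_of_isConj hA)
  have hinj : Set.InjOn (fun y : SpecialLinearGroup ι F => (y : Matrix ι ι F))
    (intertwiners F A A) := Subtype.val_injective.injOn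
  calc (intertwiners F A A).ncard ≤ (W : Set (Matrix ι ι F)).ncard := by
        refine Set.ncard_le_ncard_of_injOn _ (fun y hy => ?_) hinj (Set.toFinite _)
        rintro _ rfl
        exact hy.symm
    _ = Nat.card F ^ Module.finrank F W := Module.natCard_eq_pow_finrank
    _ ≤ Nat.card F ^ (equalPairs D).card := Nat.pow_le_pow_right Nat.card_pos hfinrank

theorem ncard_intertwiners_le [Finite F] {A A' : Matrix ι ι K} {D : ι → K}
    (hA : IsConj (diagonal D) A) :
    (intertwiners F A A').ncard ≤ Nat.card F ^ (equalPairs D).card := by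
  rcases (intertwiners F A A').eq_empty_or_nonempty with hempty | ⟨y₀, hy₀⟩
  · simp [hempty]
  · refine le_trans ?_ (ncard_intertwiners_self_le hA)
    refine Set.ncard_le_ncard_of_injOn (y₀⁻¹ * ·) (fun y hy => ?_)
      (mul_right_injective y₀⁻¹).injOn (Set.toFinite _)
    have hy₀inv : SemiconjBy
        (SpecialLinearGroup.map (algebraMap F K) y₀⁻¹ : Matrix ι ι K) A' A := by
      rw [map_inv]
      exact SemiconjBy.units_inv_symm_left
        (a := (SpecialLinearGroup.map (algebraMap F K) y₀).toGL) hy₀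
    simpa only [intertwiners, Set.mem_ofPred_eq, map_mul, Matrix.SpecialLinearGroup.coe_mul]
      using hy₀inv.mul_left hy

end Descent

section Commuting

open scoped commutatorElement

theorem exists_commutatorElement_mem_closure_pair {G : Type*} [Group G] [Group.IsNilpotent G]
    {b c : G} (h : ¬Commute b c) :
    ∃ a ∈ Subgroup.closure {b, c}, ∃ a' ∈ Subgroup.closure {b, c},
      ⁅a, a'⁆ ≠ 1 ∧ Commute ⁅a, a'⁆ b ∧ Commute ⁅a, a'⁆ c := by
  have hb : b ∈ Subgroup.closure {b, c} := Subgroup.subset_closure (by simp)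
  have hc : c ∈ Subgroup.closure {b, c} := Subgroup.subset_closure (by simp)
  obtain ⟨a, a', hcenter, hne⟩ :=
    exists_commutatorElement_mem_center_ne_one (G := Subgroup.closure {b, c})
      ⟨⟨b, hb⟩, ⟨c, hc⟩, fun heq => h (congrArg Subtype.val heq)⟩
  rw [Subgroup.mem_center_iff] at hcenter
  exact ⟨a, a.2, a', a'.2, fun heq => hne (Subtype.ext heq),
    (congrArg Subtype.val (hcenter ⟨b, hb⟩)).symm, (congrArg Subtype.val (hcenter ⟨c, hc⟩)).symm⟩

theorem one_add_pow_of_mul_self_eq_zero {R : Type*} [Semiring R] {x : R} (hx : x * x = 0) (n : ℕ) :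
    (1 + x) ^ n = 1 + n • x := by
  induction n with
  | zero => simp
  | succ n ih =>
    rw [pow_succ, ih, mul_add, mul_one, add_mul, one_mul, smul_mul_assoc, hx, smul_zero, add_zero,
      succ_nsmul, add_assoc]

variable {ι m K : Type*} [Fintype ι] [DecidableEq ι] [Fintype m] [Field K]

theorem one_add_mul_eq_one_of_pow_eq_one [DecidableEq m] [Nonempty m] {p k : ℕ} (hp : p.Prime)
    (hpK : (p : K) ≠ 0) (hm : Fintype.card m < p) {U : Matrix ι m K} {V W : Matrix m ι K}
    (hWU : W * U = 1) {θ : K} (hθ : (1 + U * V) * U = θ • U) (hdet : (1 + U * V).det = 1)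
    (hpow : (1 + U * V) ^ p ^ k = 1) :
    1 + U * V = 1 := by
  have hVU : 1 + V * U = θ • (1 : Matrix m m K) := by
    have hW := congrArg (W * ·) hθ
    simpa only [Matrix.add_mul, Matrix.one_mul, Matrix.mul_assoc, Matrix.mul_add, Matrix.mul_smul,
      ← Matrix.mul_assoc W U, hWU] using hW
  have hθcard : θ ^ Fintype.card m = 1 := by
    rw [← hdet, det_one_add_mul_comm, hVU, det_smul, det_one, mul_one]
  have hθpow : θ ^ p ^ k = 1 := by
    have hUpow : ∀ j : ℕ, (1 + U * V) ^ j * U = θ ^ j • U := fun j => by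
      induction j with
      | zero => simp
      | succ j ih => rw [pow_succ, Matrix.mul_assoc, hθ, Matrix.mul_smul, ih, smul_smul, pow_succ']
    have hone := congrArg (W * ·) (hUpow (p ^ k))
    simp only [hpow, Matrix.one_mul, Matrix.mul_smul, hWU] at hone
    obtain ⟨i⟩ := ‹Nonempty m›
    simpa using (congrFun₂ hone i i).symm
  have hθ1 : θ = 1 := by
    have hcop : (p ^ k).Coprime (Fintype.card m) :=
      (Nat.coprime_of_lt_prime Fintype.card_pos.ne' hm hp).pow_left k
    exact orderOf_eq_one_iff.1 (Nat.eq_one_of_dvd_coprimes hcop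
      (orderOf_dvd_of_pow_eq_one hθpow) (orderOf_dvd_of_pow_eq_one hθcard))
  have hVU0 : V * U = 0 := by simpa [hθ1] using hVU
  have hsq : U * V * (U * V) = 0 := by
    rw [Matrix.mul_assoc, ← Matrix.mul_assoc V, hVU0, Matrix.zero_mul, Matrix.mul_zero]
  rw [one_add_pow_of_mul_self_eq_zero hsq, ← Nat.cast_smul_eq_nsmul K, add_eq_left,
    smul_eq_zero] at hpow
  rw [hpow.resolve_left (by push_cast; exact pow_ne_zero k hpK), add_zero]

/-- The matrices that act as a scalar modulo the column space of `U`. -/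
def scalarModRange (U : Matrix ι m K) : Subalgebra K (Matrix ι ι K) where
  carrier := {A | ∃ (χ : K) (X : Matrix m ι K), A = χ • 1 + U * X}
  mul_mem' := by
    rintro _ _ ⟨χ, X, rfl⟩ ⟨χ', X', rfl⟩
    refine ⟨χ * χ', χ • X' + χ' • X + X * (U * X'), ?_⟩
    simp only [Matrix.add_mul, Matrix.mul_add, Matrix.smul_mul, Matrix.mul_smul, Matrix.one_mul,
      Matrix.mul_one, Matrix.mul_assoc, smul_add, smul_smul, mul_comm χ]
    abel
  add_mem' := by
    rintro _ _ ⟨χ, X, rfl⟩ ⟨χ', X', rfl⟩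
    exact ⟨χ + χ', X + X', by rw [add_smul, Matrix.mul_add]; abel⟩
  algebraMap_mem' χ := ⟨χ, 0, by rw [Matrix.mul_zero, add_zero, Algebra.algebraMap_eq_smul_one]⟩

theorem exists_commutator_eq_mul_of_mem_scalarModRange {U : Matrix ι m K} {A A' : Matrix ι ι K}
    (hA : A ∈ scalarModRange U) (hA' : A' ∈ scalarModRange U) :
    ∃ X : Matrix m ι K, A * A' - A' * A = U * X := by
  obtain ⟨χ, X, rfl⟩ := hA
  obtain ⟨χ', X', rfl⟩ := hA'
  refine ⟨X * U * X' - X' * U * X, ?_⟩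
  simp only [Matrix.add_mul, Matrix.mul_add, Matrix.mul_sub, Matrix.smul_mul, Matrix.mul_smul,
    Matrix.one_mul, Matrix.mul_one, Matrix.mul_assoc, smul_add, smul_smul, mul_comm χ]
  abel

theorem commute_of_mem_scalarModRange [DecidableEq m] [Nonempty m] {p : ℕ} [hp : Fact p.Prime]
    (hpK : (p : K) ≠ 0) (hm : Fintype.card m < p) {P : Subgroup (SpecialLinearGroup ι K)} [Finite P]
    (hP : IsPGroup p P) {U : Matrix ι m K} {W : Matrix m ι K} (hWU : W * U = 1) {b c : P}
    (hb : (b : Matrix ι ι K) ∈ scalarModRange U) (hc : (c : Matrix ι ι K) ∈ scalarModRange U)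
    (hscalar : ∀ Z : Matrix ι ι K, Commute Z b → Commute Z c → ∃ θ : K, Z * U = θ • U) :
    Commute b c := by
  by_contra hbc
  let f : P →* Matrix ι ι K := Matrix.SpecialLinearGroup.coeMonoidHom.comp P.subtype
  have hf : Function.Injective f :=
    Matrix.SpecialLinearGroup.coeMonoidHom_injective.comp P.subtype_injective
  have := hP.isNilpotent
  obtain ⟨a, ha, a', ha', hne, hcomm_b, hcomm_c⟩ := exists_commutatorElement_mem_closure_pair hbc
  have hclosure : ∀ g ∈ Subgroup.closure {b, c}, f g ∈ scalarModRange U := fun g hg => by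
    rw [← Subgroup.mem_toSubmonoid, Subgroup.closure_toSubmonoid_of_finite] at hg
    refine (Submonoid.closure_le (S := (scalarModRange U).toSubmonoid.comap f)).2 ?_ hg
    rintro _ (rfl | rfl)
    exacts [hb, hc]
  obtain ⟨X, hX⟩ := exists_commutator_eq_mul_of_mem_scalarModRange (hclosure a ha) (hclosure a' ha')
  have hz : f ⁅a, a'⁆ = 1 + U * (X * f (a' * a)⁻¹) := by
    rw [← Matrix.mul_assoc, ← hX, ← map_mul, ← map_mul, sub_mul, ← map_mul, ← map_mul,
      mul_inv_cancel, map_one, commutatorElement_def, _root_.mul_inv_rev, ← mul_assoc]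
    abel
  obtain ⟨θ, hθ⟩ := hscalar (f ⁅a, a'⁆) (hcomm_b.map f) (hcomm_c.map f)
  obtain ⟨k, hk⟩ := hP ⁅a, a'⁆
  have hdet : (f ⁅a, a'⁆).det = 1 := (⁅a, a'⁆ : P).1.2
  have hpow : f ⁅a, a'⁆ ^ p ^ k = 1 := by rw [← map_pow, hk, map_one]
  refine hne (hf ?_)
  rw [map_one]
  rw [hz] at hθ hdet hpow ⊢
  exact one_add_mul_eq_one_of_pow_eq_one hp.out hpK hm hWU hθ hdet hpow

end Commuting

section Homologies

variable {ι K : Type*} [Fintype ι] [Field K]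

theorem exists_mul_eq_one_and_range_mulVecLin_eq (L : Submodule K (ι → K)) :
    ∃ (U : Matrix ι (Fin (Module.finrank K L)) K) (W : Matrix (Fin (Module.finrank K L)) ι K),
      W * U = 1 ∧ LinearMap.range U.mulVecLin = L := by
  classical
  let b := Module.finBasis K L
  let f : (Fin (Module.finrank K L) → K) →ₗ[K] (ι → K) := L.subtype ∘ₗ b.equivFun.symm.toLinearMap
  have hf : Function.Injective f := L.subtype_injective.comp b.equivFun.symm.injective
  obtain ⟨g, hg⟩ := f.exists_leftInverse_of_injective (LinearMap.ker_eq_bot.2 hf)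
  refine ⟨LinearMap.toMatrix' f, LinearMap.toMatrix' g, ?_, ?_⟩
  · rw [← LinearMap.toMatrix'_comp, hg, LinearMap.toMatrix'_id]
  · rw [← toLin'_apply', toLin'_toMatrix', LinearMap.range_comp, LinearEquiv.range,
      Submodule.map_top, Submodule.range_subtype]

theorem mul_eq_smul_of_range_mulVecLin_eq_span {m : Type*} [Fintype m] {U : Matrix ι m K}
    {s : Set (ι → K)} (hU : LinearMap.range U.mulVecLin = Submodule.span K s) {Z : Matrix ι ι K}
    {θ : K} (hZ : ∀ v ∈ s, Z *ᵥ v = θ • v) : Z * U = θ • U := by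
  classical
  have hle : LinearMap.range U.mulVecLin ≤ LinearMap.eqLocus Z.mulVecLin (θ • LinearMap.id) := by
    rwa [hU, Submodule.span_le]
  refine ext_of_mulVec_single fun j => ?_
  rw [← mulVec_mulVec, smul_mulVec]
  exact hle ⟨Pi.single j 1, rfl⟩

theorem exists_smul_of_commute_vecMulVec {Z : Matrix ι ι K} {u φ : ι → K} (hφu : φ ⬝ᵥ u = 1)
    (hZ : Commute Z (vecMulVec u φ)) : ∃ θ : K, Z *ᵥ u = θ • u ∧ φ ᵥ* Z = θ • φ := by
  have hrank : vecMulVec (Z *ᵥ u) φ = vecMulVec u (φ ᵥ* Z) := by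
    rw [← mul_vecMulVec, hZ.eq, vecMulVec_mul]
  refine ⟨φ ⬝ᵥ Z *ᵥ u, ?_, ?_⟩
  · have happly := congrArg (· *ᵥ u) hrank
    simpa only [vecMulVec_mulVec, hφu, MulOpposite.op_one, one_smul, op_smul_eq_smul,
      ← dotProduct_mulVec] using happly
  · have happly := congrArg (φ ᵥ* ·) hrank
    simpa only [vecMul_vecMulVec, hφu, one_smul] using happly.symm

theorem commute_vecMulVec_of_dotProduct_eq_zero {u φ w ψ : ι → K} (hφw : φ ⬝ᵥ w = 0)
    (hψu : ψ ⬝ᵥ u = 0) : Commute (vecMulVec u φ) (vecMulVec w ψ) := by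
  simp only [Commute, SemiconjBy, vecMulVec_mul_vecMulVec, hφw, hψu, zero_smul, vecMulVec_zero]

theorem exists_smul_of_commute_vecMulVec_pair {Z : Matrix ι ι K} {u φ w ψ : ι → K}
    (hφu : φ ⬝ᵥ u = 1) (hψw : ψ ⬝ᵥ w = 1) (hne : ¬(φ ⬝ᵥ w = 0 ∧ ψ ⬝ᵥ u = 0))
    (hZ : Commute Z (vecMulVec u φ)) (hZ' : Commute Z (vecMulVec w ψ)) :
    ∃ θ : K, Z *ᵥ u = θ • u ∧ Z *ᵥ w = θ • w := by
  obtain ⟨θ, hu, hφ⟩ := exists_smul_of_commute_vecMulVec hφu hZ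
  obtain ⟨θ', hw, hψ⟩ := exists_smul_of_commute_vecMulVec hψw hZ'
  have hφw : θ • (φ ⬝ᵥ w) = θ' • (φ ⬝ᵥ w) := by
    rw [← smul_dotProduct, ← hφ, ← dotProduct_mulVec, hw, dotProduct_smul]
  have hψu : θ' • (ψ ⬝ᵥ u) = θ • (ψ ⬝ᵥ u) := by
    rw [← smul_dotProduct, ← hψ, ← dotProduct_mulVec, hu, dotProduct_smul]
  obtain rfl : θ = θ' := by
    rcases not_and_or.1 hne with h | h
    exacts [smul_left_injective K h hφw, (smul_left_injective K h hψu).symm]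
  exact ⟨θ, hu, hw⟩

theorem semiconjBy_smul_one_add_smul_iff {R : Type*} [Ring R] [Algebra K R] {Z E E' : R} {μ κ : K}
    (hκ : κ ≠ 0) : SemiconjBy Z (μ • 1 + κ • E) (μ • 1 + κ • E') ↔ SemiconjBy Z E E' := by
  simp only [SemiconjBy, mul_add, add_mul, mul_smul_comm, smul_mul_assoc, mul_one, one_mul,
    add_right_inj, smul_right_inj hκ]

variable [DecidableEq ι]

theorem smul_one_add_smul_vecMulVec_mem_scalarModRange {m : Type*} [Fintype m] {U : Matrix ι m K}
    {u : ι → K} (hu : u ∈ LinearMap.range U.mulVecLin) (μ κ : K) (φ : ι → K) :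
    μ • 1 + κ • vecMulVec u φ ∈ scalarModRange U := by
  obtain ⟨x, rfl⟩ := hu
  refine ⟨μ, vecMulVec (κ • x) φ, ?_⟩
  rw [mul_vecMulVec, mulVec_smul, smul_vecMulVec, mulVecLin_apply]

theorem exists_vecMulVec_eq_of_isConj {E : Matrix ι ι K} {i : ι}
    (hE : IsConj (diagonal (Pi.single i 1)) E) : ∃ u φ, E = vecMulVec u φ ∧ φ ⬝ᵥ u = 1 := by
  obtain ⟨c, hc⟩ := hE
  refine ⟨(c : Matrix ι ι K) *ᵥ Pi.single i 1, Pi.single i 1 ᵥ* (↑c⁻¹ : Matrix ι ι K), ?_, ?_⟩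
  · rw [← mul_vecMulVec, ← vecMulVec_mul, ← single_eq_single_vecMulVec_single, ← diagonal_single,
      ← Matrix.mul_assoc, hc.eq, c.mul_inv_cancel_right]
  · rw [dotProduct_mulVec, vecMul_vecMul, c.inv_mul, vecMul_one, single_dotProduct,
      Pi.single_eq_same, one_mul]

theorem commute_vecMulVec_of_isPGroup {p : ℕ} [hp : Fact p.Prime] (hp2 : p ≠ 2)
    (hpK : (p : K) ≠ 0) {P : Subgroup (SpecialLinearGroup ι K)} [Finite P] (hP : IsPGroup p P)
    {b c : P} {μ κ ν ρ : K} {u φ w ψ : ι → K} (hκ : κ ≠ 0) (hρ : ρ ≠ 0)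
    (hb : (b : Matrix ι ι K) = μ • 1 + κ • vecMulVec u φ)
    (hc : (c : Matrix ι ι K) = ν • 1 + ρ • vecMulVec w ψ)
    (hφu : φ ⬝ᵥ u = 1) (hψw : ψ ⬝ᵥ w = 1) : Commute (vecMulVec u φ) (vecMulVec w ψ) := by
  classical
  by_cases hzero : φ ⬝ᵥ w = 0 ∧ ψ ⬝ᵥ u = 0
  · exact commute_vecMulVec_of_dotProduct_eq_zero hzero.1 hzero.2
  obtain ⟨U, W, hWU, hL⟩ := exists_mul_eq_one_and_range_mulVecLin_eq (Submodule.span K {u, w})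
  have hu : u ∈ LinearMap.range U.mulVecLin := by
    rw [hL]; exact Submodule.subset_span (by simp)
  have hw : w ∈ LinearMap.range U.mulVecLin := by
    rw [hL]; exact Submodule.subset_span (by simp)
  have hscalar : ∀ Z : Matrix ι ι K, Commute Z b → Commute Z c → ∃ θ : K, Z * U = θ • U := by
    intro Z hZb hZc
    rw [hb, Commute, semiconjBy_smul_one_add_smul_iff hκ] at hZb
    rw [hc, Commute, semiconjBy_smul_one_add_smul_iff hρ] at hZc
    obtain ⟨θ, hθu, hθw⟩ := exists_smul_of_commute_vecMulVec_pair hφu hψw hzero hZb hZc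
    exact ⟨θ, mul_eq_smul_of_range_mulVecLin_eq_span hL (by rintro _ (rfl | rfl) <;> assumption)⟩
  have hcard : Module.finrank K (Submodule.span K {u, w}) < p := by
    have hle : Module.finrank K (Submodule.span K ({u, w} : Set (ι → K))) ≤ 2 :=
      (finrank_span_le_card _).trans (by simpa using Finset.card_le_two)
    exact hle.trans_lt (lt_of_le_of_ne hp.out.two_le hp2.symm)
  have : Nonempty (Fin (Module.finrank K (Submodule.span K {u, w}))) := by
    by_contra hempty
    rw [not_nonempty_iff] at hempty
    obtain ⟨x, hx⟩ := hu
    have hu0 : u = 0 := hx.symm.trans (by rw [Subsingleton.elim x 0, map_zero])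
    rw [hu0, dotProduct_zero] at hφu
    exact zero_ne_one hφu
  have hbc := commute_of_mem_scalarModRange hpK (by rwa [Fintype.card_fin]) hP hWU
    (by rw [hb]; exact smul_one_add_smul_vecMulVec_mem_scalarModRange hu μ κ φ)
    (by rw [hc]; exact smul_one_add_smul_vecMulVec_mem_scalarModRange hw ν ρ ψ) hscalar
  have hmat : Commute (b : Matrix ι ι K) c := hbc.map
    (Matrix.SpecialLinearGroup.coeMonoidHom.comp P.subtype : P →* Matrix ι ι K)
  rw [hb, hc] at hmat
  have hleft := (semiconjBy_smul_one_add_smul_iff hρ).1 hmat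
  exact ((semiconjBy_smul_one_add_smul_iff hκ).1 (Commute.symm hleft)).symm

/-- The rank-one idempotents `E` such that `P` contains a homology `μ • 1 + κ • E` with `κ ≠ 0`:
these encode the centres and axes of the homologies lying in `P`. -/
def homologyProjections (P : Subgroup (SpecialLinearGroup ι K)) : Set (Matrix ι ι K) :=
  {E | (∃ i, IsConj (diagonal (Pi.single i 1)) E) ∧
    ∃ b ∈ P, ∃ μ κ : K, κ ≠ 0 ∧ (b : Matrix ι ι K) = μ • 1 + κ • E}

theorem mul_eq_zero_of_mem_homologyProjections {p : ℕ} [Fact p.Prime] (hp2 : p ≠ 2)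
    (hpK : (p : K) ≠ 0) {P : Subgroup (SpecialLinearGroup ι K)} [Finite P] (hP : IsPGroup p P)
    {E E' : Matrix ι ι K} (hE : E ∈ homologyProjections P) (hE' : E' ∈ homologyProjections P)
    (hne : E ≠ E') : E * E' = 0 := by
  obtain ⟨⟨i, hi⟩, b, hb, μ, κ, hκ, hbE⟩ := hE
  obtain ⟨⟨j, hj⟩, c, hc, ν, ρ, hρ, hcE⟩ := hE'
  obtain ⟨u, φ, rfl, hφu⟩ := exists_vecMulVec_eq_of_isConj hi
  obtain ⟨w, ψ, rfl, hψw⟩ := exists_vecMulVec_eq_of_isConj hj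
  have hcomm := commute_vecMulVec_of_isPGroup hp2 hpK hP (b := ⟨b, hb⟩) (c := ⟨c, hc⟩)
    hκ hρ hbE hcE hφu hψw
  set E := vecMulVec u φ with hE
  set E' := vecMulVec w ψ with hE'
  have hEE : E * E = E := by rw [hE, vecMulVec_mul_vecMulVec, hφu, one_smul]
  have hE'E' : E' * E' = E' := by rw [hE', vecMulVec_mul_vecMulVec, hψw, one_smul]
  have hleft : E * E' = ((φ ⬝ᵥ w) * (ψ ⬝ᵥ u)) • E := calc
    E * E' = E * E' * E := by rw [mul_assoc, ← hcomm.eq, ← mul_assoc, hEE]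
    _ = _ := by
      rw [hE, hE', vecMulVec_mul_vecMulVec, vecMulVec_mul_vecMulVec, smul_dotProduct, smul_eq_mul,
        vecMulVec_smul]
  have hright : E * E' = ((φ ⬝ᵥ w) * (ψ ⬝ᵥ u)) • E' := calc
    E * E' = E' * E * E' := by rw [← hcomm.eq, mul_assoc, hE'E']
    _ = _ := by
      rw [hE, hE', vecMulVec_mul_vecMulVec, vecMulVec_mul_vecMulVec, smul_dotProduct, smul_eq_mul,
        vecMulVec_smul, mul_comm]
  by_cases hτ : (φ ⬝ᵥ w) * (ψ ⬝ᵥ u) = 0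
  · rw [hleft, hτ, zero_smul]
  · exact absurd (smul_right_injective _ hτ (hleft.symm.trans hright)) hne

theorem finite_homologyProjections_and_ncard_le {p : ℕ} [Fact p.Prime] (hp2 : p ≠ 2)
    (hpK : (p : K) ≠ 0) {P : Subgroup (SpecialLinearGroup ι K)} [Finite P] (hP : IsPGroup p P) :
    (homologyProjections P).Finite ∧ (homologyProjections P).ncard ≤ Fintype.card ι := by
  choose i hi using fun E : homologyProjections P => E.2.1
  choose u φ hE hφu using fun E => exists_vecMulVec_eq_of_isConj (hi E)
  have hli : LinearIndependent K u := by
    refine .of_pairwise_dual_eq_zero_one u (fun E => dotProductBilin K K (φ E)) ?_ hφu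
    intro E E' hne
    have hzero :=
      mul_eq_zero_of_mem_homologyProjections hp2 hpK hP E.2 E'.2 (Subtype.coe_ne_coe.2 hne)
    rw [hE E, hE E', vecMulVec_mul_vecMulVec, vecMulVec_smul, smul_eq_zero, vecMulVec_eq_zero]
      at hzero
    refine hzero.resolve_right (not_or.2 ⟨fun h => ?_, fun h => ?_⟩)
    · simpa [h] using hφu E
    · simpa [h] using hφu E'
  have := hli.finite
  have := Fintype.ofFinite (homologyProjections P)
  refine ⟨Set.toFinite _, ?_⟩
  rw [← Nat.card_coe_set_eq, Nat.card_eq_fintype_card,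
    ← Module.finrank_fintype_fun_eq_card K (η := ι)]
  exact hli.fintype_card_le_finrank

end Homologies

section Fusion

theorem ncard_biUnion_le_ncard_mul {α β : Type*} {t : Set α} (ht : t.Finite) {s : α → Set β} {N : ℕ}
    (h : ∀ a ∈ t, (s a).ncard ≤ N) : (⋃ a ∈ t, s a).ncard ≤ t.ncard * N := by
  have hsum := (Finset.set_ncard_biUnion_le ht.toFinset s).trans
    (Finset.sum_le_card_nsmul _ _ N fun a ha => h a (ht.mem_toFinset.1 ha))
  simpa only [ht.mem_toFinset, smul_eq_mul, ← Set.ncard_eq_toFinset_card t ht] using hsum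

variable {ι F K : Type*} [Fintype ι] [DecidableEq ι] [Field F] [Field K] [Algebra F K]

theorem mem_center_of_isConj_diagonal {D : ι → K} (hD : ∀ i j, D i = D j)
    {b : SpecialLinearGroup ι F}
    (hb : IsConj (diagonal D) (SpecialLinearGroup.map (algebraMap F K) b : Matrix ι ι K)) :
    b ∈ Subgroup.center (SpecialLinearGroup ι F) := by
  have hdiagonal : ∀ X : Matrix ι ι K, Commute (diagonal D) X := fun X => by
    ext i j
    rw [diagonal_mul, mul_diagonal, hD i j, mul_comm]
  obtain ⟨c, hc⟩ := hb
  have hscalar : diagonal D = (SpecialLinearGroup.map (algebraMap F K) b : Matrix ι ι K) :=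
    c.isUnit.mul_left_injective ((hdiagonal c).eq.trans hc.eq)
  refine Subgroup.mem_center_iff.2 fun g => ?_
  refine Subtype.ext (Matrix.map_injective (algebraMap F K).injective ?_)
  change (SpecialLinearGroup.map (algebraMap F K) (g * b) : Matrix ι ι K) =
    SpecialLinearGroup.map (algebraMap F K) (b * g)
  rw [map_mul, map_mul, Matrix.SpecialLinearGroup.coe_mul, Matrix.SpecialLinearGroup.coe_mul,
    ← hscalar, (hdiagonal _).eq]

theorem exists_eq_smul_one_add_smul_of_isConj {D : ι → K} {i₀ i₁ : ι}
    (hD : ∀ j ≠ i₀, D j = D i₁) {A : Matrix ι ι K} (hA : IsConj (diagonal D) A) :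
    ∃ E, IsConj (diagonal (Pi.single i₀ 1)) E ∧ A = D i₁ • 1 + (D i₀ - D i₁) • E := by
  obtain ⟨c, hc⟩ := hA
  have hdecomp : diagonal D =
      D i₁ • (1 : Matrix ι ι K) + (D i₀ - D i₁) • diagonal (Pi.single i₀ 1) := by
    rw [smul_one_eq_diagonal, ← diagonal_smul, diagonal_add]
    congr 1
    ext j
    by_cases hj : j = i₀
    · simp [hj]
    · simp [hj, hD j hj]
  have hE := c.mk_semiconjBy (diagonal (Pi.single i₀ 1))
  refine ⟨_, ⟨c, hE⟩, (Units.mul_left_inj c).1 (hc.eq.symm.trans ?_)⟩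
  rw [hdecomp]
  exact ((SemiconjBy.one_right _).smul_right (D i₁)).add_right (hE.smul_right (D i₀ - D i₁))

theorem mem_fusingSet_center_cases [IsAlgClosed K] {p : ℕ} (hpK : (p : K) ≠ 0)
    {P : Subgroup (SpecialLinearGroup ι F)} (hP : IsPGroup p P) {y : SpecialLinearGroup ι F}
    (hy : y ∈ fusingSet P (Subgroup.center _)) :
    (∃ E ∈ homologyProjections (P.map (SpecialLinearGroup.map (algebraMap F K))),
      ∃ E' ∈ homologyProjections (P.map (SpecialLinearGroup.map (algebraMap F K))),
        y ∈ intertwiners F E E') ∨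
    ∃ b ∈ P, ∃ c ∈ P,
      (∃ D, IsConj (diagonal D) (SpecialLinearGroup.map (algebraMap F K) c : Matrix ι ι K) ∧
        (equalPairs D).card + 2 * Fintype.card ι + (2 * Fintype.card ι - 8) ≤
          Fintype.card ι ^ 2) ∧
      y ∈ intertwiners F (SpecialLinearGroup.map (algebraMap F K) c : Matrix ι ι K)
        (SpecialLinearGroup.map (algebraMap F K) b : Matrix ι ι K) := by
  obtain ⟨b, hb, hb1, hc⟩ := hy
  let φ : SpecialLinearGroup ι F →* Matrix ι ι K :=
    Matrix.SpecialLinearGroup.coeMonoidHom.comp (SpecialLinearGroup.map (algebraMap F K))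
  have hyb : SemiconjBy (φ y) (φ (y⁻¹ * b * y)) (φ b) := by
    rw [SemiconjBy, ← map_mul, ← map_mul, mul_assoc, mul_inv_cancel_left]
  obtain ⟨k, hk⟩ := hP ⟨_, hc⟩
  obtain ⟨D, hD⟩ := exists_isConj_diagonal_of_pow_eq_one (A := φ (y⁻¹ * b * y)) (N := p ^ k)
    (by push_cast; exact pow_ne_zero k hpK)
    (by rw [← map_pow, show (y⁻¹ * b * y) ^ p ^ k = 1 from congrArg Subtype.val hk, map_one])
  have hDb : IsConj (diagonal D) (φ b) := hD.trans ⟨Units.map φ (toUnits y), hyb⟩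
  rcases card_equalPairs_trichotomy D with hconst | ⟨i₀, i₁, hne, hrest⟩ | hcard
  · exact absurd (mem_center_of_isConj_diagonal hconst hDb) hb1
  · obtain ⟨E, hE, hcE⟩ := exists_eq_smul_one_add_smul_of_isConj hrest hD
    obtain ⟨E', hE', hbE'⟩ := exists_eq_smul_one_add_smul_of_isConj hrest hDb
    have hκ : D i₀ - D i₁ ≠ 0 := sub_ne_zero.2 hne
    refine Or.inl ⟨E, ⟨⟨i₀, hE⟩, _, Subgroup.mem_map_of_mem _ hc, _, _, hκ, hcE⟩,
      E', ⟨⟨i₀, hE'⟩, _, Subgroup.mem_map_of_mem _ hb, _, _, hκ, hbE'⟩, ?_⟩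
    rwa [hcE, hbE', semiconjBy_smul_one_add_smul_iff hκ] at hyb
  · exact Or.inr ⟨b, hb, _, hc, ⟨D, hD, hcard⟩, hyb⟩

theorem ncard_fusingSet_center_le [IsAlgClosed K] [Finite F] {p : ℕ} [Fact p.Prime] (hp2 : p ≠ 2)
    (hpK : (p : K) ≠ 0) {P : Subgroup (SpecialLinearGroup ι F)} (hP : IsPGroup p P) :
    (fusingSet P (Subgroup.center _)).ncard ≤
      Fintype.card ι ^ 2 * Nat.card F ^ ((Fintype.card ι - 1) ^ 2 + 1) +
        Nat.card P ^ 2 *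
          Nat.card F ^ (Fintype.card ι ^ 2 - 2 * Fintype.card ι - (2 * Fintype.card ι - 8)) := by
  let φ := SpecialLinearGroup.map (n := ι) (algebraMap F K)
  let H := homologyProjections (P.map φ)
  let S := {cb : SpecialLinearGroup ι F × SpecialLinearGroup ι F | cb ∈ (P : Set _) ×ˢ (P : Set _) ∧
    ∃ D, IsConj (diagonal D) (φ cb.1 : Matrix ι ι K) ∧
      (equalPairs D).card + 2 * Fintype.card ι + (2 * Fintype.card ι - 8) ≤ Fintype.card ι ^ 2}
  have hcover : fusingSet P (Subgroup.center _) ⊆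
      (⋃ E ∈ H ×ˢ H, intertwiners F E.1 E.2) ∪ ⋃ cb ∈ S,
        intertwiners F (φ cb.1 : Matrix ι ι K) (φ cb.2 : Matrix ι ι K) := by
    intro y hy
    rcases mem_fusingSet_center_cases hpK hP hy with
      ⟨E, hE, E', hE', hyE⟩ | ⟨b, hb, c, hc, hD, hycb⟩
    · exact Or.inl (Set.mem_biUnion (x := (E, E')) ⟨hE, hE'⟩ hyE)
    · exact Or.inr (Set.mem_biUnion (x := (c, b)) ⟨⟨hc, hb⟩, hD⟩ hycb)
  have : Finite (P.map φ) := Finite.of_surjective _ (φ.subgroupMap_surjective P)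
  obtain ⟨hfinite, hcard⟩ := finite_homologyProjections_and_ncard_le hp2 hpK (hP.map φ)
  have hS : S.ncard ≤ Nat.card P ^ 2 := by
    refine (Set.ncard_le_ncard (fun cb hcb => hcb.1) (Set.toFinite _)).trans_eq ?_
    rw [Set.ncard_prod, sq, ← Nat.card_coe_set_eq]
    rfl
  have hHH : (H ×ˢ H).ncard ≤ Fintype.card ι ^ 2 := by
    rw [Set.ncard_prod, sq]
    exact Nat.mul_le_mul hcard hcard
  calc (fusingSet P (Subgroup.center _)).ncard
      ≤ _ := Set.ncard_le_ncard hcover (Set.toFinite _)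
    _ ≤ _ := Set.ncard_union_le _ _
    _ ≤ _ := add_le_add (ncard_biUnion_le_ncard_mul (hfinite.prod hfinite) fun E hE => ?_)
        (ncard_biUnion_le_ncard_mul S.toFinite fun cb hcb => ?_)
    _ ≤ _ := Nat.add_le_add (Nat.mul_le_mul_right _ hHH) (Nat.mul_le_mul_right _ hS)
  · obtain ⟨i, hi⟩ := hE.1.1
    exact (ncard_intertwiners_le hi).trans
      (Nat.pow_le_pow_right Nat.card_pos (card_equalPairs_single_le i))
  · obtain ⟨D, hD, hDcard⟩ := hcb.2
    exact (ncard_intertwiners_le hD).trans (Nat.pow_le_pow_right Nat.card_pos (by omega))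

end Fusion

section PrimePart

theorem dvd_pow_sub_one_iff_orderOf_dvd {p q : ℕ} (hq : q ≠ 0) (i : ℕ) :
    p ∣ q ^ i - 1 ↔ orderOf (q : ZMod p) ∣ i := by
  rw [orderOf_dvd_iff_pow_eq_one, ← ZMod.natCast_eq_zero_iff,
    Nat.cast_sub (Nat.one_le_pow _ _ (Nat.pos_of_ne_zero hq)), sub_eq_zero]
  push_cast
  rfl

theorem prod_pow_sub_one_ne_zero {q : ℕ} (hq : 2 ≤ q) (n : ℕ) :
    ∏ i ∈ Finset.range n, (q ^ (i + 1) - 1) ≠ 0 :=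
  Finset.prod_ne_zero_iff.2 fun i _ => (Nat.sub_pos_of_lt (Nat.one_lt_pow (by omega) hq)).ne'

variable {p : ℕ} [Fact p.Prime] {q : ℕ}

theorem orderOf_natCast_zmod_pos (hpq : ¬p ∣ q) : 0 < orderOf (q : ZMod p) :=
  orderOf_pos_iff.2 <| isOfFinOrder_iff_pow_eq_one.2
    ⟨p - 1, Nat.sub_pos_of_lt (Nat.Prime.one_lt Fact.out),
      ZMod.pow_card_sub_one_eq_one (mt (ZMod.natCast_eq_zero_iff q p).1 hpq)⟩

theorem padicValNat_pow_mul_sub_one (hp2 : p ≠ 2) (hq : 2 ≤ q) (hpq : ¬p ∣ q) {j : ℕ}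
    (hj : j ≠ 0) :
    padicValNat p (q ^ (orderOf (q : ZMod p) * j) - 1) =
      padicValNat p (q ^ orderOf (q : ZMod p) - 1) + padicValNat p j := by
  have h := padicValNat.pow_sub_pow (p := p) ((Fact.out : p.Prime).odd_of_ne_two hp2) (y := 1)
    (Nat.one_lt_pow (orderOf_natCast_zmod_pos hpq).ne' hq)
    ((dvd_pow_sub_one_iff_orderOf_dvd (by omega) _).2 dvd_rfl)
    (fun h => hpq ((Fact.out : p.Prime).dvd_of_dvd_pow h)) hj
  rwa [one_pow, ← pow_mul] at h

theorem padicValNat_prod_pow_sub_one (hp2 : p ≠ 2) (hq : 2 ≤ q) (hpq : ¬p ∣ q) (n : ℕ) :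
    padicValNat p (∏ i ∈ Finset.range n, (q ^ (i + 1) - 1)) =
      n / orderOf (q : ZMod p) * padicValNat p (q ^ orderOf (q : ZMod p) - 1) +
        padicValNat p (n / orderOf (q : ZMod p)).factorial := by
  induction n with
  | zero => simp
  | succ n ih =>
    rw [Finset.prod_range_succ, padicValNat.mul (prod_pow_sub_one_ne_zero hq n)
      (Nat.sub_pos_of_lt (Nat.one_lt_pow n.succ_ne_zero hq)).ne', ih]
    by_cases hdvd : orderOf (q : ZMod p) ∣ n + 1
    · have hn : n + 1 = orderOf (q : ZMod p) * (n / orderOf (q : ZMod p) + 1) := by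
        rw [← Nat.succ_div_of_dvd hdvd, Nat.mul_div_cancel' hdvd]
      rw [Nat.succ_div_of_dvd hdvd, Nat.factorial_succ,
        padicValNat.mul (Nat.succ_ne_zero _) (Nat.factorial_ne_zero _)]
      rw [show q ^ n.succ = _ from congrArg (q ^ ·) hn,
        padicValNat_pow_mul_sub_one hp2 hq hpq (Nat.succ_ne_zero _)]
      ring
    · rw [Nat.succ_div_of_not_dvd hdvd, padicValNat.eq_zero_of_not_dvd
        (mt (dvd_pow_sub_one_iff_orderOf_dvd (by omega) _).1 hdvd), add_zero]

theorem pow_padicValNat_factorial_sq_le (hp2 : p ≠ 2) (m : ℕ) :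
    (p ^ padicValNat p m.factorial) ^ 2 ≤ 3 ^ m := by
  have hlegendre : (p - 1) * padicValNat p m.factorial ≤ m := by
    rw [sub_one_mul_padicValNat_factorial]
    exact Nat.sub_le _ _
  have hsq : ∀ k, (k + 3) ^ 2 ≤ 3 ^ (k + 2) := fun k => by
    induction k with
    | zero => norm_num
    | succ k ih =>
      rw [show k + 1 + 2 = k + 2 + 1 from rfl, pow_succ 3]
      nlinarith [Nat.zero_le (k * k)]
  obtain ⟨k, rfl⟩ := Nat.exists_eq_add_of_le'
    (lt_of_le_of_ne (Nat.Prime.two_le Fact.out) hp2.symm : 3 ≤ p)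
  rw [pow_right_comm]
  calc ((k + 3) ^ 2) ^ padicValNat (k + 3) m.factorial
      ≤ (3 ^ (k + 2)) ^ padicValNat (k + 3) m.factorial := Nat.pow_le_pow_left (hsq k) _
    _ = 3 ^ ((k + 2) * padicValNat (k + 3) m.factorial) := (pow_mul _ _ _).symm
    _ ≤ 3 ^ m := Nat.pow_le_pow_right (by norm_num) hlegendre

theorem pow_padicValNat_pow_sub_one_le (hq : 2 ≤ q) {e : ℕ} (he : e ≠ 0) (h : ¬p ∣ q - 1) :
    p ^ padicValNat p (q ^ e - 1) ≤ 2 * q ^ (e - 1) := by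
  have hcop : (p ^ padicValNat p (q ^ e - 1)).Coprime (q - 1) :=
    ((Nat.Prime.coprime_iff_not_dvd Fact.out).2 h).pow_left _
  have hdvd : p ^ padicValNat p (q ^ e - 1) ∣ ∑ i ∈ Finset.range e, q ^ i := by
    refine hcop.dvd_of_dvd_mul_right ?_
    rw [Nat.geomSum_eq hq, Nat.div_mul_cancel (by simpa using Nat.sub_dvd_pow_sub_pow q 1 e)]
    exact pow_padicValNat_dvd
  obtain ⟨k, rfl⟩ := Nat.exists_eq_succ_of_ne_zero he
  rw [Finset.sum_range_succ] at hdvd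
  have hsum := Nat.geomSum_lt hq (s := Finset.range k) (n := k) fun i hi => Finset.mem_range.1 hi
  exact (Nat.le_of_dvd (by omega) hdvd).trans (by rw [Nat.succ_sub_one]; omega)

theorem pow_sq_le_of_dvd_sub_one (hp2 : p ≠ 2) (hq : 2 ≤ q) {n v : ℕ}
    (hv : v ≤ (n - 1) * padicValNat p (q - 1) + padicValNat p n.factorial) :
    (p ^ v) ^ 2 ≤ 3 ^ n * q ^ (2 * n - 2) := by
  have ha : p ^ padicValNat p (q - 1) ≤ q :=
    (Nat.le_of_dvd (by omega) pow_padicValNat_dvd).trans (Nat.sub_le _ _)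
  calc (p ^ v) ^ 2 ≤ (p ^ ((n - 1) * padicValNat p (q - 1) + padicValNat p n.factorial)) ^ 2 :=
        Nat.pow_le_pow_left (Nat.pow_le_pow_right (Nat.Prime.pos Fact.out) hv) 2
    _ = (p ^ padicValNat p n.factorial) ^ 2 * (p ^ padicValNat p (q - 1)) ^ (2 * n - 2) := by
        rw [pow_add, mul_pow, ← pow_mul _ _ (2 * n - 2), ← pow_mul p (_ * _), mul_comm]
        congr 2
        rw [show 2 * n - 2 = (n - 1) * 2 by omega]
        ring
    _ ≤ 3 ^ n * q ^ (2 * n - 2) :=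
        Nat.mul_le_mul (pow_padicValNat_factorial_sq_le hp2 n) (Nat.pow_le_pow_left ha _)

theorem pow_sq_le_of_not_dvd_sub_one (hp2 : p ≠ 2) (hq : 2 ≤ q) {e m v : ℕ} (he : e ≠ 0)
    (h : ¬p ∣ q - 1) (hv : v ≤ m * padicValNat p (q ^ e - 1) + padicValNat p m.factorial) :
    (p ^ v) ^ 2 ≤ 12 ^ m * q ^ (2 * ((e - 1) * m)) := by
  calc (p ^ v) ^ 2 ≤ (p ^ (m * padicValNat p (q ^ e - 1) + padicValNat p m.factorial)) ^ 2 :=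
        Nat.pow_le_pow_left (Nat.pow_le_pow_right (Nat.Prime.pos Fact.out) hv) 2
    _ = ((p ^ padicValNat p (q ^ e - 1)) ^ m) ^ 2 * (p ^ padicValNat p m.factorial) ^ 2 := by
        rw [pow_add, mul_pow, ← pow_mul p _ m, mul_comm m]
    _ ≤ ((2 * q ^ (e - 1)) ^ m) ^ 2 * 3 ^ m :=
        Nat.mul_le_mul (Nat.pow_le_pow_left
          (Nat.pow_le_pow_left (pow_padicValNat_pow_sub_one_le hq he h) _) _)
          (pow_padicValNat_factorial_sq_le hp2 m)
    _ = 12 ^ m * q ^ (2 * ((e - 1) * m)) := by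
        rw [show (12 : ℕ) = 2 ^ 2 * 3 from rfl, mul_pow (2 ^ 2), ← pow_mul 2]
        ring

theorem two_pow_mul_twelve_pow_le {m n : ℕ} (h : m * 2 ≤ n) : 2 ^ n * 12 ^ m ≤ 7 ^ n := by
  obtain ⟨t, rfl⟩ := Nat.exists_eq_add_of_le' h
  calc 2 ^ (t + m * 2) * 12 ^ m = 2 ^ t * 48 ^ m := by
        rw [pow_add, pow_mul', mul_assoc, ← mul_pow]
        rfl
    _ ≤ 7 ^ t * 49 ^ m := by gcongr <;> norm_num
    _ = 7 ^ (t + m * 2) := by rw [pow_add, pow_mul' 7 m]; rfl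

theorem two_pow_mul_pow_sq_le (hp2 : p ≠ 2) (hq : 2 ≤ q) (hpq : ¬p ∣ q) {n v : ℕ} (hn : n ≠ 0)
    (hv : p ^ v * (q - 1) ∣ ∏ i ∈ Finset.range n, (q ^ (i + 1) - 1)) :
    2 ^ n * (p ^ v) ^ 2 ≤ 7 ^ n * q ^ (2 * n - 2) := by
  have he := orderOf_natCast_zmod_pos hpq
  have hval : v + padicValNat p (q - 1) ≤ n / orderOf (q : ZMod p) *
      padicValNat p (q ^ orderOf (q : ZMod p) - 1) +
        padicValNat p (n / orderOf (q : ZMod p)).factorial := by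
    rw [← padicValNat_prod_pow_sub_one hp2 hq hpq,
      ← padicValNat_dvd_iff_le (prod_pow_sub_one_ne_zero hq n), pow_add]
    exact (mul_dvd_mul_left _ pow_padicValNat_dvd).trans hv
  have hdvd := dvd_pow_sub_one_iff_orderOf_dvd (p := p) (q := q) (by omega) 1
  rw [pow_one, Nat.dvd_one] at hdvd
  by_cases h : p ∣ q - 1
  · rw [hdvd.1 h, pow_one, Nat.div_one] at hval
    have hv' : v ≤ (n - 1) * padicValNat p (q - 1) + padicValNat p n.factorial := by
      rw [Nat.sub_one_mul]
      have := Nat.le_mul_of_pos_left (padicValNat p (q - 1)) (Nat.pos_of_ne_zero hn)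
      omega
    calc 2 ^ n * (p ^ v) ^ 2 ≤ 2 ^ n * (3 ^ n * q ^ (2 * n - 2)) :=
          Nat.mul_le_mul_left _ (pow_sq_le_of_dvd_sub_one hp2 hq hv')
      _ = 6 ^ n * q ^ (2 * n - 2) := by rw [← mul_assoc, ← mul_pow]; rfl
      _ ≤ 7 ^ n * q ^ (2 * n - 2) := by gcongr; norm_num
  · generalize orderOf (q : ZMod p) = e at he hval hdvd
    have he2 : 2 ≤ e := by grind
    have hle : n / e * e ≤ n := Nat.div_mul_le_self n e
    generalize n / e = m at hval hle
    have hexp : 2 * ((e - 1) * m) ≤ 2 * n - 2 := by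
      rw [Nat.sub_one_mul, mul_comm e]
      rcases Nat.eq_zero_or_pos m with rfl | hm
      · simp
      · omega
    calc 2 ^ n * (p ^ v) ^ 2 ≤ 2 ^ n * (12 ^ m * q ^ (2 * ((e - 1) * m))) :=
          Nat.mul_le_mul_left _ (pow_sq_le_of_not_dvd_sub_one hp2 hq he.ne' h (by omega))
      _ = 2 ^ n * 12 ^ m * q ^ (2 * ((e - 1) * m)) := (mul_assoc _ _ _).symm
      _ ≤ 7 ^ n * q ^ (2 * n - 2) := Nat.mul_le_mul
          (two_pow_mul_twelve_pow_le ((Nat.mul_le_mul_left m he2).trans hle))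
          (Nat.pow_le_pow_right (by omega) hexp)

end PrimePart

section Order

theorem one_sub_sub_sq_add_pow_le_prod {x : ℝ} (h0 : 0 ≤ x) (h1 : x ≤ 1) (k : ℕ) :
    1 - x - x ^ 2 + x ^ (k + 2) ≤ ∏ i ∈ Finset.range (k + 1), (1 - x ^ (i + 1)) := by
  induction k with
  | zero => simp
  | succ k ih =>
    rw [Finset.prod_range_succ]
    have hfactor : 0 ≤ 1 - x ^ (k + 2) := sub_nonneg.2 (pow_le_one₀ h0 h1)
    have hpow : x ^ (2 * k + 4) ≤ x ^ (k + 4) := pow_le_pow_of_le_one h0 h1 (by omega)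
    calc 1 - x - x ^ 2 + x ^ (k + 1 + 2)
        ≤ (1 - x - x ^ 2 + x ^ (k + 2)) * (1 - x ^ (k + 2)) := by ring_nf at hpow ⊢; linarith
      _ ≤ _ := mul_le_mul_of_nonneg_right ih hfactor

theorem one_fourth_le_prod_one_sub_pow {x : ℝ} (h0 : 0 ≤ x) (h1 : x ≤ 1 / 2) (n : ℕ) :
    1 / 4 ≤ ∏ i ∈ Finset.range n, (1 - x ^ (i + 1)) := by
  rcases n with _ | k
  · norm_num
  · have hprod := one_sub_sub_sq_add_pow_le_prod h0 (h1.trans (by norm_num)) k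
    have hpow : 0 ≤ x ^ (k + 2) := by positivity
    nlinarith

theorem prod_pow_sub_pow (q n : ℕ) : ∏ i : Fin n, (q ^ n - q ^ (i : ℕ)) =
    (∏ i ∈ Finset.range n, q ^ i) * ∏ i ∈ Finset.range n, (q ^ (i + 1) - 1) := by
  rw [Fin.prod_univ_eq_prod_range (fun i => q ^ n - q ^ i) n,
    ← Finset.prod_range_reflect (fun i => q ^ (i + 1) - 1), ← Finset.prod_mul_distrib]
  refine Finset.prod_congr rfl fun i hi => ?_
  rw [Finset.mem_range] at hi
  rw [Nat.mul_sub, ← pow_add, mul_one, show i + (n - 1 - i + 1) = n by omega]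

theorem pow_sq_le_four_mul_prod {q : ℕ} (hq : 2 ≤ q) (n : ℕ) :
    q ^ n ^ 2 ≤ 4 * ∏ i : Fin n, (q ^ n - q ^ (i : ℕ)) := by
  have hq0 : (q : ℝ) ≠ 0 := by positivity
  have hprod : ((∏ i : Fin n, (q ^ n - q ^ (i : ℕ)) : ℕ) : ℝ) =
      (q : ℝ) ^ n ^ 2 * ∏ i ∈ Finset.range n, (1 - (q : ℝ)⁻¹ ^ (i + 1)) := by
    rw [Fin.prod_univ_eq_prod_range (fun i => q ^ n - q ^ i) n, sq, pow_mul,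
      ← Finset.prod_range_reflect (fun i => 1 - (q : ℝ)⁻¹ ^ (i + 1)), Nat.cast_prod]
    conv_rhs => enter [1, 2]; rw [← Finset.card_range n]
    rw [← Finset.prod_const, ← Finset.prod_mul_distrib]
    refine Finset.prod_congr rfl fun i hi => ?_
    rw [Finset.mem_range] at hi
    rw [Nat.cast_sub (Nat.pow_le_pow_right (by omega) hi.le), Nat.cast_pow, Nat.cast_pow, mul_sub,
      mul_one, inv_pow, ← pow_sub₀ _ hq0 (by omega), show n - (n - 1 - i + 1) = i by omega]
  have hfourth := one_fourth_le_prod_one_sub_pow (x := (q : ℝ)⁻¹) (by positivity)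
    (by rw [one_div]; gcongr; exact_mod_cast hq) n
  have hpos : (0 : ℝ) ≤ (q : ℝ) ^ n ^ 2 := by positivity
  have hreal : (q : ℝ) ^ n ^ 2 ≤ 4 * ((∏ i : Fin n, (q ^ n - q ^ (i : ℕ)) : ℕ) : ℝ) := by
    rw [hprod]
    nlinarith
  exact_mod_cast hreal

theorem card_specialLinearGroup_mul_card_units {ι R : Type*} [Fintype ι] [DecidableEq ι]
    [Nonempty ι] [CommRing R] :
    Nat.card (SpecialLinearGroup ι R) * Nat.card Rˣ = Nat.card (GL ι R) := by
  let det : GL ι R →* Rˣ := GeneralLinearGroup.det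
  have hindex : det.ker.index = Nat.card Rˣ := by
    rw [Subgroup.index_ker, MonoidHom.range_eq_top.2 GeneralLinearGroup.det_surjective,
      Subgroup.card_top]
  have hker : Nat.card det.ker = Nat.card (SpecialLinearGroup ι R) := by
    rw [← Nat.card_range_of_injective SpecialLinearGroup.toGL_injective,
      SpecialLinearGroup.range_toGL]
    rfl
  rw [← hindex, ← hker, Subgroup.card_mul_index]

variable {F : Type*} [Field F] [Finite F]

theorem card_specialLinearGroup_mul {n : ℕ} (hn : n ≠ 0) :
    Nat.card (SpecialLinearGroup (Fin n) F) * (Nat.card F - 1) =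
      ∏ i : Fin n, (Nat.card F ^ n - Nat.card F ^ (i : ℕ)) := by
  have := NeZero.mk hn
  have := Fintype.ofFinite F
  rw [← Nat.card_units, card_specialLinearGroup_mul_card_units, card_GL_field,
    Nat.card_eq_fintype_card]

theorem pow_sq_le_four_mul_card_specialLinearGroup {n : ℕ} (hn : n ≠ 0) :
    Nat.card F ^ n ^ 2 ≤ 4 * (Nat.card (SpecialLinearGroup (Fin n) F) * Nat.card F) := by
  refine (pow_sq_le_four_mul_prod Finite.one_lt_card n).trans (Nat.mul_le_mul_left 4 ?_)
  rw [← card_specialLinearGroup_mul hn]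
  exact Nat.mul_le_mul_left _ (Nat.sub_le _ _)

theorem card_projectiveSpecialLinearGroup_le {ι : Type*} [Fintype ι] [DecidableEq ι] :
    Nat.card (ProjectiveSpecialLinearGroup ι F) ≤ Nat.card F ^ Fintype.card ι ^ 2 := by
  calc Nat.card (ProjectiveSpecialLinearGroup ι F)
      ≤ Nat.card (SpecialLinearGroup ι F) :=
        Nat.card_le_card_of_surjective _ (QuotientGroup.mk'_surjective _)
    _ ≤ Nat.card (ι → ι → F) :=
        Nat.card_le_card_of_injective (fun A => A.1) Subtype.val_injective
    _ = Nat.card F ^ Fintype.card ι ^ 2 := by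
        rw [Nat.card_fun, Nat.card_fun, Nat.card_eq_fintype_card (α := ι), ← pow_mul, sq]

theorem two_pow_mul_card_sq_le {n p : ℕ} [Fact p.Prime] (hn : n ≠ 0) (hp2 : p ≠ 2)
    (hpF : ¬p ∣ Nat.card F) {P : Subgroup (SpecialLinearGroup (Fin n) F)} (hP : IsPGroup p P) :
    2 ^ n * Nat.card P ^ 2 ≤ 7 ^ n * Nat.card F ^ (2 * n - 2) := by
  obtain ⟨v, hv⟩ := IsPGroup.iff_card.1 hP
  have hdvd : p ^ v * (Nat.card F - 1) ∣ ∏ i : Fin n, (Nat.card F ^ n - Nat.card F ^ (i : ℕ)) := by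
    rw [← card_specialLinearGroup_mul hn, ← hv]
    exact mul_dvd_mul_right (Subgroup.card_subgroup_dvd_card P) _
  have hcop : (p ^ v * (Nat.card F - 1)).Coprime (Nat.card F) :=
    (((Nat.Prime.coprime_iff_not_dvd Fact.out).2 hpF).pow_left v).mul_left
      ((Nat.coprime_self_sub_left Nat.card_pos).2 (Nat.coprime_one_left _))
  rw [prod_pow_sub_pow] at hdvd
  rw [hv]
  exact two_pow_mul_pow_sq_le hp2 Finite.one_lt_card hpF hn
    ((Nat.Coprime.prod_right fun i _ => hcop.pow_right i).dvd_of_dvd_mul_left hdvd)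

end Order

section Asymptotics

open scoped MatrixGroups

theorem sq_le_two_mul_two_pow (n : ℕ) : n ^ 2 ≤ 2 * 2 ^ n := by
  rcases Nat.lt_or_ge n 3 with h | h
  · interval_cases n <;> norm_num
  · induction n, h using Nat.le_induction with
    | base => norm_num
    | succ n hn ih => rw [pow_succ 2]; nlinarith

theorem sq_mul_pow_mul_eight_pow_le {n q : ℕ} (hn : 2 ≤ n) (hq : 2 ≤ q) :
    n ^ 2 * q ^ ((n - 1) ^ 2 + 1) * (8 ^ n * q ^ 2) ≤ 32 * 7 ^ n * q ^ n ^ 2 := by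
  obtain ⟨k, rfl⟩ := Nat.exists_eq_add_of_le' hn
  have hconst : (k + 2) ^ 2 * 8 ^ (k + 2) ≤ 32 * 7 ^ (k + 2) * 4 ^ k := by
    calc (k + 2) ^ 2 * 8 ^ (k + 2) ≤ 2 * 2 ^ (k + 2) * 8 ^ (k + 2) :=
          Nat.mul_le_mul_right _ (sq_le_two_mul_two_pow _)
      _ = 512 * 16 ^ k := by rw [mul_assoc, ← mul_pow, pow_add]; ring
      _ ≤ 1568 * 28 ^ k := by gcongr <;> norm_num
      _ = 32 * 7 ^ (k + 2) * 4 ^ k := by rw [show 28 = 7 * 4 from rfl, mul_pow]; ring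
  have hpow : 4 ^ k ≤ (q ^ 2) ^ k := Nat.pow_le_pow_left (Nat.pow_le_pow_left hq 2) k
  calc (k + 2) ^ 2 * q ^ ((k + 1) ^ 2 + 1) * (8 ^ (k + 2) * q ^ 2)
      = (k + 2) ^ 2 * 8 ^ (k + 2) * q ^ ((k + 1) ^ 2 + 3) := by ring
    _ ≤ 32 * 7 ^ (k + 2) * (q ^ 2) ^ k * q ^ ((k + 1) ^ 2 + 3) :=
        Nat.mul_le_mul_right _ (hconst.trans (Nat.mul_le_mul_left _ hpow))
    _ = 32 * 7 ^ (k + 2) * q ^ (k + 2) ^ 2 := by ring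

theorem four_pow_mul_pow_le {n q : ℕ} (hn : 2 ≤ n) (hq : 2 ≤ q) :
    4 ^ n * q ^ (2 * n + (n ^ 2 - 2 * n - (2 * n - 8))) ≤ 256 * q ^ n ^ 2 := by
  have hle : 2 * n + (2 * n - 8) ≤ n ^ 2 := by
    obtain ⟨k, rfl⟩ := Nat.exists_eq_add_of_le' hn
    ring_nf
    omega
  have hfour : 4 ^ n ≤ 256 * q ^ (2 * n - 8) := by
    calc 4 ^ n = 2 ^ (2 * n) := by rw [pow_mul]; rfl
      _ ≤ 2 ^ (8 + (2 * n - 8)) := Nat.pow_le_pow_right two_pos (by omega)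
      _ = 256 * 2 ^ (2 * n - 8) := pow_add _ _ _
      _ ≤ 256 * q ^ (2 * n - 8) := by gcongr
  calc 4 ^ n * q ^ (2 * n + (n ^ 2 - 2 * n - (2 * n - 8)))
      ≤ 256 * q ^ (2 * n - 8) * q ^ (2 * n + (n ^ 2 - 2 * n - (2 * n - 8))) :=
        Nat.mul_le_mul_right _ hfour
    _ = 256 * q ^ n ^ 2 := by
        rw [mul_assoc, ← pow_add]
        congr 2
        omega

theorem sq_mul_pow_sub_mul_eight_pow_le {n q M : ℕ} (hn : 2 ≤ n) (hq : 2 ≤ q)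
    (hM : 2 ^ n * M ^ 2 ≤ 7 ^ n * q ^ (2 * n - 2)) :
    M ^ 2 * q ^ (n ^ 2 - 2 * n - (2 * n - 8)) * (8 ^ n * q ^ 2) ≤ 256 * 7 ^ n * q ^ n ^ 2 := by
  have hfour := four_pow_mul_pow_le hn hq
  generalize n ^ 2 - 2 * n - (2 * n - 8) = d at hfour ⊢
  calc M ^ 2 * q ^ d * (8 ^ n * q ^ 2) = 2 ^ n * M ^ 2 * (4 ^ n * q ^ (d + 2)) := by
        rw [show 8 = 2 * 4 from rfl, mul_pow]
        ring
    _ ≤ 7 ^ n * q ^ (2 * n - 2) * (4 ^ n * q ^ (d + 2)) := Nat.mul_le_mul_right _ hM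
    _ = 7 ^ n * (4 ^ n * q ^ (2 * n + d)) := by
        rw [show 2 * n + d = 2 * n - 2 + (d + 2) by omega, pow_add q (2 * n - 2)]
        ring
    _ ≤ 7 ^ n * (256 * q ^ n ^ 2) := Nat.mul_le_mul_left _ hfour
    _ = 256 * 7 ^ n * q ^ n ^ 2 := by ring

theorem natCast_ne_zero_of_not_dvd_card {R : Type*} [CommRing R] [Nontrivial R] [Finite R] {p : ℕ}
    [Fact p.Prime] (h : ¬p ∣ Nat.card R) : (p : R) ≠ 0 := by
  have := Fintype.ofFinite R
  rw [Nat.card_eq_fintype_card, ← prime_dvd_char_iff_dvd_card] at h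
  exact ((isUnit_iff_not_dvd_char R p).2 h).ne_zero

variable {n : ℕ} {F : Type*} [Field F] [Finite F] {p : ℕ} [Fact p.Prime]

theorem ncard_fusingSet_center_mul_le (hn : 2 ≤ n) (hp2 : p ≠ 2) (hpF : ¬p ∣ Nat.card F)
    {P : Subgroup SL(n, F)} (hP : IsPGroup p P) :
    (fusingSet P (Subgroup.center _)).ncard * 8 ^ n * Nat.card F ≤
      2048 * 7 ^ n * Nat.card SL(n, F) := by
  have hq : 2 ≤ Nat.card F := Finite.one_lt_card
  have hpK : (p : AlgebraicClosure F) ≠ 0 := by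
    rw [← map_natCast (algebraMap F (AlgebraicClosure F))]
    exact (map_ne_zero _).2 (natCast_ne_zero_of_not_dvd_card hpF)
  have hcount := ncard_fusingSet_center_le hp2 hpK hP
  have hsylow := two_pow_mul_card_sq_le (by omega) hp2 hpF hP
  have horder := pow_sq_le_four_mul_card_specialLinearGroup (F := F) (n := n) (by omega)
  rw [Fintype.card_fin] at hcount
  generalize (fusingSet P (Subgroup.center _)).ncard = B at hcount ⊢
  generalize Nat.card F = q at *
  generalize Nat.card P = M at *
  refine Nat.le_of_mul_le_mul_right (c := q) ?_ (by omega)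
  calc B * 8 ^ n * q * q = B * (8 ^ n * q ^ 2) := by ring
    _ ≤ (n ^ 2 * q ^ ((n - 1) ^ 2 + 1) +
          M ^ 2 * q ^ (n ^ 2 - 2 * n - (2 * n - 8))) * (8 ^ n * q ^ 2) :=
        Nat.mul_le_mul_right _ hcount
    _ ≤ 32 * 7 ^ n * q ^ n ^ 2 + 256 * 7 ^ n * q ^ n ^ 2 := by
        rw [add_mul]
        exact add_le_add (sq_mul_pow_mul_eight_pow_le hn hq)
          (sq_mul_pow_sub_mul_eight_pow_le hn hq hsylow)
    _ ≤ 512 * 7 ^ n * q ^ n ^ 2 := by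
        rw [← add_mul, ← add_mul]
        gcongr
        norm_num
    _ ≤ 512 * 7 ^ n * (4 * (Nat.card SL(n, F) * q)) :=
        Nat.mul_le_mul_left _ horder
    _ = 2048 * 7 ^ n * Nat.card SL(n, F) * q := by ring

theorem ncard_fusingSet_sylow_div_le (hn : 2 ≤ n) (hp2 : p ≠ 2) (hpF : ¬p ∣ Nat.card F)
    (H : Sylow p PSL(n, F)) :
    ((fusingSet (H : Subgroup PSL(n, F)) ⊥).ncard : ℝ) / Nat.card PSL(n, F) ≤
      2048 * (7 / 8) ^ n / Nat.card F := by
  obtain ⟨P, hP⟩ := exists_sylow_ncard_fusingSet_quotient_le le_rfl H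
  have hcount : ((fusingSet (P : Subgroup SL(n, F)) (Subgroup.center _)).ncard : ℝ) * 8 ^ n *
      Nat.card F ≤ 2048 * 7 ^ n * Nat.card SL(n, F) := by
    exact_mod_cast ncard_fusingSet_center_mul_le hn hp2 hpF P.isPGroup'
  have hF : (0 : ℝ) < Nat.card F := Nat.cast_pos.2 Nat.card_pos
  refine hP.trans ?_
  rw [div_le_div_iff₀ (Nat.cast_pos.2 Nat.card_pos) hF, div_pow]
  field_simp
  linarith

theorem card_primeFactors_le_logb {m : ℕ} (hm : m ≠ 0) :
    (m.primeFactors.card : ℝ) ≤ Real.logb 2 m := by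
  have hpow : 2 ^ m.primeFactors.card ≤ m :=
    (Finset.pow_card_le_prod _ _ _ fun p hp => (Nat.prime_of_mem_primeFactors hp).two_le).trans
      (Nat.le_of_dvd (Nat.pos_of_ne_zero hm) (Nat.prod_primeFactors_dvd m))
  exact (Nat.cast_le.2 (Nat.le_log_of_pow_le Nat.one_lt_two hpow)).trans (Real.natLog_le_logb m 2)

theorem sum_ncard_fusingSet_sylow_div_le (hn : 2 ≤ n) {s : Finset ℕ}
    (hs : s ⊆ (Nat.card PSL(n, F)).primeFactors)
    (hsF : ∀ p ∈ s, p ≠ 2 ∧ ¬p ∣ Nat.card F)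
    (H : (p : ℕ) → Sylow p PSL(n, F)) :
    ∑ p ∈ s, ((fusingSet (H p : Subgroup PSL(n, F)) ⊥).ncard : ℝ) / Nat.card PSL(n, F) ≤
      2048 / Real.log 2 * (n ^ 2 * (7 / 8) ^ n * (Real.log (Nat.card F) / Nat.card F)) := by
  have hcard : (s.card : ℝ) ≤ Real.logb 2 (Nat.card F ^ n ^ 2 : ℕ) := by
    have hle := card_projectiveSpecialLinearGroup_le (ι := Fin n) (F := F)
    rw [Fintype.card_fin] at hle
    refine (Nat.cast_le.2 (Finset.card_le_card hs)).trans
      ((card_primeFactors_le_logb Nat.card_pos.ne').trans ?_)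
    exact Real.logb_le_logb_of_le one_lt_two (Nat.cast_pos.2 Nat.card_pos) (Nat.cast_le.2 hle)
  calc _ ≤ s.card • (2048 * (7 / 8) ^ n / (Nat.card F : ℝ)) :=
        Finset.sum_le_card_nsmul _ _ _ fun p hp =>
          have := Fact.mk (Nat.prime_of_mem_primeFactors (hs hp))
          ncard_fusingSet_sylow_div_le hn (hsF p hp).1 (hsF p hp).2 (H p)
    _ ≤ Real.logb 2 (Nat.card F ^ n ^ 2 : ℕ) * (2048 * (7 / 8) ^ n / (Nat.card F : ℝ)) := by
        rw [nsmul_eq_mul]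
        gcongr
    _ = _ := by
        rw [Real.logb, Nat.cast_pow, Real.log_pow]
        push_cast
        ring

theorem tendsto_sq_mul_pow_mul_log_div_cofinite (c : ℝ) :
    Filter.Tendsto (fun i : ℕ × ℕ => c * ((i.1 : ℝ) ^ 2 * (7 / 8) ^ i.1 * (Real.log i.2 / i.2)))
      Filter.cofinite (nhds 0) := by
  have hn : Filter.Tendsto (fun n : ℕ => (n : ℝ) ^ 2 * (7 / 8) ^ n) Filter.cofinite (nhds 0) := by
    rw [Nat.cofinite_eq_atTop]
    exact tendsto_pow_const_mul_const_pow_of_lt_one 2 (by norm_num) (by norm_num)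
  have hq : Filter.Tendsto (fun q : ℕ => Real.log q / q) Filter.cofinite (nhds 0) := by
    rw [Nat.cofinite_eq_atTop]
    exact Real.isLittleO_log_id_atTop.tendsto_div_nhds_zero.comp tendsto_natCast_atTop_atTop
  simpa using (tendsto_mul_cofinite_nhds_zero hn hq).const_mul c

end Asymptotics

/-- Asymptotics for `γ(G)` (Theorem 5.1(ii) for linear groups, `n ≥ 2`): for every
`ε > 0` there is `N` such that whenever `G = PSLₙ(q)` with `n ≥ 2`, `q = r^f` a power
of a prime `r`, and `|G| ≥ N`, the sum of `Q_p(G)` over the prime divisors `p` with `p ≠ 2` and `p ≠ r`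
of `|G|` is less than `ε`. -/
theorem stmt18 : ∀ ε : ℝ, 0 < ε → ∃ N : ℕ,
    ∀ (r f n q : ℕ), r.Prime → 0 < f → q = r ^ f → 2 ≤ n →
    ∀ (F : Type) [Field F] [Fintype F], Fintype.card F = q →
    ∀ H : (p : ℕ) → Sylow p (ProjectiveSpecialLinearGroup (Fin n) F),
    N ≤ Nat.card (ProjectiveSpecialLinearGroup (Fin n) F) →
    ∑ p ∈ (Nat.card (ProjectiveSpecialLinearGroup (Fin n) F)).primeFactors.filter
        (fun p => p ≠ 2 ∧ p ≠ r),
      (Nat.card {x : ProjectiveSpecialLinearGroup (Fin n) F |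
          (H p : Subgroup (ProjectiveSpecialLinearGroup (Fin n) F)) ⊓
            Subgroup.map (MulAut.conj x⁻¹).toMonoidHom
              (H p : Subgroup (ProjectiveSpecialLinearGroup (Fin n) F)) ≠ ⊥} : ℝ)
        / (Nat.card (ProjectiveSpecialLinearGroup (Fin n) F) : ℝ)
      < ε := by
  intro ε hε
  have hexceptional := (tendsto_sq_mul_pow_mul_log_div_cofinite (2048 / Real.log 2)).eventually
    (gt_mem_nhds hε)
  rw [Filter.eventually_cofinite] at hexceptional
  obtain ⟨N, hN⟩ := (hexceptional.image fun i => i.2 ^ i.1 ^ 2).bddAbove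
  refine ⟨N + 1, fun r f n q hr _ hqr hn F _ _ hF H hcard => ?_⟩
  have hq : Nat.card F = q := Nat.card_eq_fintype_card.trans hF
  have hle := card_projectiveSpecialLinearGroup_le (ι := Fin n) (F := F)
  rw [Fintype.card_fin, hq] at hle
  have hfilter : ∀ p ∈ (Nat.card (ProjectiveSpecialLinearGroup (Fin n) F)).primeFactors.filter
      (fun p => p ≠ 2 ∧ p ≠ r), p ≠ 2 ∧ ¬p ∣ Nat.card F := fun p hp => by
    rw [Finset.mem_filter] at hp
    rw [hq, hqr]
    exact ⟨hp.2.1, fun hdvd => hp.2.2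
      (Nat.prime_eq_prime_of_dvd_pow (Nat.prime_of_mem_primeFactors hp.1) hr hdvd)⟩
  simp_rw [setOf_inf_map_conj_inv_ne_bot, Nat.card_coe_set_eq]
  refine (sum_ncard_fusingSet_sylow_div_le hn (Finset.filter_subset _ _) hfilter H).trans_lt ?_
  by_contra hge
  exact absurd (hN ⟨(n, q), hq ▸ hge, rfl⟩) (by simp only; omega)
end

section
/- Let n be an integer with 5 ≤ n ≤ 500 and let G be the alternating group A_n. Then for every family (H_p)_{p ∈ π(G)} consisting of one Sylow p-subgroup H_p of G for each prime divisor p of |G|, there exists an element x ∈ G such that H_p ∩ H_p^x = 1 for every p ∈ π(G). -/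
/-
For a `p`-subgroup `H` of `G = Aₙ`, the `x` such that `H` meets its conjugate by `x` nontrivially
are counted through the pairs `(g, x)` with `g` of order `p` and both `g`, `x g x⁻¹` in `H`: each
such `x` occurs in at least `p - 1` pairs. An element of order `p` is a product of `k` disjoint
`p`-cycles for some `k`, so the number of pairs is bounded by the sum over `k` of the squared number
of such elements in a Sylow subgroup, times the order of their centralizer in `Sₙ`. The Sylow
subgroups of `Sₙ` are products of iterated wreath products, whose elements of order `p` have an
explicit generating polynomial. By Frattini's argument, passing from `Sₙ` to `Aₙ` halves the number
of `x`. The resulting bounds, summed over all primes, stay below `|Aₙ|` except for `n = 8`, where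
`p = 2` alone uses up too much; there, a `2`-subgroup that meets one of its conjugates trivially has
a double coset of size `64 ^ 2`, which consists of good elements.
-/

namespace LisiSabatini

open Equiv Equiv.Perm Finset Polynomial
open scoped Nat

section MeetingSet

variable {G : Type*} [Group G]

theorem mem_inf_map_conj_inv {H : Subgroup G} {x g : G} :
    g ∈ H ⊓ H.map (MulAut.conj x⁻¹).toMonoidHom ↔ g ∈ H ∧ x * g * x⁻¹ ∈ H := by
  refine Subgroup.mem_inf.trans <| and_congr_right fun _ ↦ Subgroup.mem_map_equiv.trans ?_
  simp

variable [Fintype G]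

open Classical in
theorem pred_prime_le_card_pow_eq_one [DecidableEq G] {p : ℕ} [Fact p.Prime]
    {K : Subgroup G} (hK : IsPGroup p K) (hne : K ≠ ⊥) :
    p - 1 ≤ #{g : G | g ∈ K ∧ g ^ p = 1 ∧ g ≠ 1} := by
  obtain ⟨k, hk, hcard⟩ := hK.nontrivial_iff_card.mp (K.nontrivial_iff_ne_bot.mpr hne)
  obtain ⟨c, hc⟩ := exists_prime_orderOf_dvd_card' (G := K) p (hcard ▸ dvd_pow_self p hk.ne')
  rw [← Subgroup.orderOf_coe] at hc
  calc p - 1 = #(Ico 1 p) := by simp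
    _ ≤ _ := card_le_card_of_injOn (fun i ↦ (c : G) ^ i) (fun i hi ↦ ?_) fun i hi j hj hij ↦ ?_
  · have hi : 1 ≤ i ∧ i < p := by simpa using hi
    simp only [coe_filter, mem_univ, true_and, Set.mem_ofPred_eq]
    refine ⟨K.pow_mem c.2 i, ?_, pow_ne_one_of_lt_orderOf (by omega) (hc ▸ hi.2)⟩
    rw [pow_right_comm, ← hc, pow_orderOf_eq_one, one_pow]
  · exact pow_injOn_Iio_orderOf (by simp_all) (by simp_all) hij

open Classical in
/-- The elements `x` for which `H` and its conjugate `H ^ x` meet nontrivially. -/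
noncomputable def meetingSet (H : Subgroup G) : Finset G :=
  {x | H ⊓ H.map (MulAut.conj x⁻¹).toMonoidHom ≠ ⊥}

open Classical in
theorem mem_meetingSet {H : Subgroup G} {x : G} :
    x ∈ meetingSet H ↔ H ⊓ H.map (MulAut.conj x⁻¹).toMonoidHom ≠ ⊥ := by
  simp [meetingSet]

theorem notMem_meetingSet {H : Subgroup G} {x : G} :
    x ∉ meetingSet H ↔ ∀ g ∈ H, x * g * x⁻¹ ∈ H → g = 1 := by
  simp only [mem_meetingSet, not_not, Subgroup.eq_bot_iff_forall, mem_inf_map_conj_inv, and_imp]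

theorem meetingSet_mono {H K : Subgroup G} (h : H ≤ K) : meetingSet H ⊆ meetingSet K := by
  intro x
  simp only [mem_meetingSet]
  exact mt fun hK ↦ le_bot_iff.mp <| (inf_le_inf h (Subgroup.map_mono h)).trans hK.le

open Classical in
theorem exists_forall_inf_map_conj_eq_bot {ι : Type*} [Fintype ι] (H : ι → Subgroup G)
    (h : ∑ i, #(meetingSet (H i)) < Fintype.card G) :
    ∃ x : G, ∀ i, H i ⊓ (H i).map (MulAut.conj x⁻¹).toMonoidHom = ⊥ := by
  have hlt : #(univ.biUnion fun i ↦ meetingSet (H i)) < #(univ : Finset G) :=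
    card_biUnion_le.trans_lt h
  obtain ⟨x, -, hx⟩ := exists_mem_notMem_of_card_lt_card hlt
  exact ⟨x, by simpa [mem_meetingSet] using hx⟩

open Classical in
theorem card_meetingSet_add_card_sq_le {H : Subgroup G} {x : G} (hx : x ∉ meetingSet H) :
    #(meetingSet H) + Nat.card H ^ 2 ≤ Fintype.card G := by
  rw [notMem_meetingSet] at hx
  have hinj : Function.Injective fun a : H × H ↦ (a.1 : G) * x * a.2 := by
    rintro ⟨a, b⟩ ⟨c, d⟩ h
    have hx' : x * (b * d⁻¹ : H) * x⁻¹ = (a⁻¹ * c : H) := by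
      have h : (a : G) * x * b = c * x * d := h
      push_cast
      rw [eq_inv_mul_iff_mul_eq, ← mul_assoc, ← mul_assoc, ← mul_assoc, h]
      group
    have hbd : b = d := by
      simpa [mul_inv_eq_one] using hx _ (b * d⁻¹).2 (hx' ▸ (a⁻¹ * c).2)
    subst hbd
    simpa [inv_mul_eq_one, eq_comm] using hx'
  have hdisj : Disjoint (meetingSet H) (univ.image fun a : H × H ↦ (a.1 : G) * x * a.2) := by
    simp only [disjoint_right, mem_image, mem_univ, true_and, Prod.exists, notMem_meetingSet]
    rintro _ ⟨a, b, rfl⟩ g hg h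
    have hbg : (b : G) * g * (b : G)⁻¹ = 1 := by
      refine hx _ (H.mul_mem (H.mul_mem b.2 hg) (H.inv_mem b.2)) ?_
      convert H.mul_mem (H.mul_mem (H.inv_mem a.2) h) a.2 using 1
      group
    simpa using hbg
  calc #(meetingSet H) + Nat.card H ^ 2
      = #(meetingSet H) + #(univ.image fun a : H × H ↦ (a.1 : G) * x * a.2) := by
        rw [card_image_of_injective _ hinj]
        simp [sq]
    _ ≤ Fintype.card G := (card_union_of_disjoint hdisj).symm.trans_le (card_le_univ _)

open Classical in
theorem pred_mul_card_meetingSet_le [DecidableEq G] {p : ℕ} [Fact p.Prime] {H : Subgroup G}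
    (hH : IsPGroup p H) :
    (p - 1) * #(meetingSet H) ≤
      ∑ g : G with g ∈ H ∧ g ^ p = 1 ∧ g ≠ 1, #{x : G | x * g * x⁻¹ ∈ H} := by
  have hmeet : ∀ x ∈ meetingSet H,
      p - 1 ≤ #{g : G | (g ∈ H ∧ g ^ p = 1 ∧ g ≠ 1) ∧ x * g * x⁻¹ ∈ H} := fun x hx ↦ by
    refine (pred_prime_le_card_pow_eq_one (hH.to_le inf_le_left) (mem_meetingSet.mp hx)).trans_eq
      (congrArg card (filter_congr fun g _ ↦ ?_))
    rw [mem_inf_map_conj_inv]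
    tauto
  calc (p - 1) * #(meetingSet H) = ∑ x ∈ meetingSet H, (p - 1) := by simp [mul_comm]
    _ ≤ ∑ x ∈ meetingSet H, #{g : G | (g ∈ H ∧ g ^ p = 1 ∧ g ≠ 1) ∧ x * g * x⁻¹ ∈ H} :=
      sum_le_sum hmeet
    _ ≤ ∑ x : G, #{g : G | (g ∈ H ∧ g ^ p = 1 ∧ g ≠ 1) ∧ x * g * x⁻¹ ∈ H} :=
      sum_le_sum_of_subset (subset_univ _)
    _ = _ := by
      simp only [← filter_filter]
      exact sum_card_bipartiteAbove_eq_sum_card_bipartiteBelow fun x g : G ↦ x * g * x⁻¹ ∈ H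

open Classical in
theorem card_conj_mem_le (H : Subgroup G) (g : G) :
    #{x : G | x * g * x⁻¹ ∈ H} ≤
      #{h : G | h ∈ H ∧ IsConj g h} * Nat.card (Subgroup.centralizer {g}) := by
  rw [mul_comm]
  refine card_le_mul_card_image_of_maps_to (f := fun x ↦ x * g * x⁻¹) ?_ _ fun h hh ↦ ?_
  · intro x hx
    simp only [mem_filter, mem_univ, true_and] at hx ⊢
    exact ⟨hx, isConj_iff.mpr ⟨x, rfl⟩⟩
  · obtain ⟨y, rfl⟩ := isConj_iff.mp (mem_filter.mp hh).2.2
    rw [Nat.card_eq_fintype_card, Fintype.card_subtype]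
    refine card_le_card_of_injOn (y⁻¹ * ·) (fun x hx ↦ ?_) (mul_right_injective y⁻¹).injOn
    have hxy : x * g * x⁻¹ = y * g * y⁻¹ := (mem_filter.mp hx).2
    simp only [coe_filter, mem_univ, true_and, Set.mem_ofPred_eq,
      Subgroup.mem_centralizer_singleton_iff]
    rw [mul_assoc, mul_inv_eq_iff_eq_mul.mp hxy]
    group

end MeetingSet

section Alternating

variable {α : Type*} [Fintype α] [DecidableEq α] [Nontrivial α] {p : ℕ} [Fact p.Prime]

theorem exists_odd_mem_normalizer (P : Sylow p (alternatingGroup α)) :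
    ∃ u ∈ Subgroup.normalizer
        ((P : Subgroup (alternatingGroup α)).map (alternatingGroup α).subtype : Set (Perm α)),
      sign u = -1 := by
  by_contra! heven
  obtain ⟨i, j, hij⟩ := exists_pair_ne α
  have hle : Subgroup.normalizer
      ((P : Subgroup (alternatingGroup α)).map (alternatingGroup α).subtype : Set (Perm α)) ≤
        alternatingGroup α := fun u hu ↦
    mem_alternatingGroup.mpr ((Int.units_eq_one_or _).resolve_right (heven u hu))
  have htop : alternatingGroup α = ⊤ := sup_eq_right.mpr hle ▸ Sylow.normalizer_sup_eq_top P
  have hswap : sign (swap i j) = 1 := mem_alternatingGroup.mp (htop ▸ Subgroup.mem_top _)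
  exact absurd ((sign_swap hij).symm.trans hswap) (by decide)

open Classical in
theorem two_mul_card_conj_mem (P : Sylow p (alternatingGroup α))
    (g : alternatingGroup α) :
    2 * #{x : alternatingGroup α | x * g * x⁻¹ ∈ P} ≤
      #{x : Perm α | x * g * x⁻¹ ∈
        (P : Subgroup (alternatingGroup α)).map (alternatingGroup α).subtype} := by
  obtain ⟨u, hu, hsign⟩ := exists_odd_mem_normalizer P
  set Q := (P : Subgroup (alternatingGroup α)).map (alternatingGroup α).subtype
  set E : Finset (Perm α) :=
    ({x : alternatingGroup α | x * g * x⁻¹ ∈ P} : Finset _).map (Function.Embedding.subtype _)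
  have hE : ∀ x ∈ E, sign x = 1 ∧ x * g * x⁻¹ ∈ Q := by
    intro x hx
    obtain ⟨y, hy, rfl⟩ := mem_map.mp hx
    exact ⟨mem_alternatingGroup.mp y.2, _, (mem_filter.mp hy).2, rfl⟩
  have hdisj : Disjoint E (E.image (u * ·)) := by
    refine disjoint_left.mpr fun x hx hux ↦ ?_
    obtain ⟨y, hy, rfl⟩ := mem_image.mp hux
    have := (hE _ hx).1
    rw [Perm.sign_mul, hsign, (hE y hy).1] at this
    exact absurd this (by decide)
  calc 2 * #{x : alternatingGroup α | x * g * x⁻¹ ∈ P} = #(E ∪ E.image (u * ·)) := by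
        rw [card_union_of_disjoint hdisj, card_image_of_injective _ (mul_right_injective u),
          card_map, two_mul]
    _ ≤ _ := card_le_card <| union_subset (fun x hx ↦ by simpa using (hE x hx).2) fun x hx ↦ ?_
  obtain ⟨y, hy, rfl⟩ := mem_image.mp hx
  have := (Subgroup.mem_normalizer_iff.mp hu _).mp (hE y hy).2
  simpa [mul_assoc] using this

end Alternating

section TorsionPoly

variable {α β : Type*} [Fintype α] [DecidableEq α] [Fintype β] [DecidableEq β] {p : ℕ}

open Classical in
/-- The generating polynomial of the elements of `H` with `g ^ p = 1`, where `X ^ k` stands for an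
element moving `p * k` points, that is, for a product of `k` disjoint `p`-cycles. -/
noncomputable def torsionPoly (p : ℕ) (H : Subgroup (Perm α)) : ℕ[X] :=
  ∑ g : Perm α with g ∈ H ∧ g ^ p = 1, X ^ (#g.support / p)

open Classical in
theorem coeff_torsionPoly (H : Subgroup (Perm α)) (k : ℕ) :
    (torsionPoly p H).coeff k =
      #{g : Perm α | (g ∈ H ∧ g ^ p = 1) ∧ k = #g.support / p} := by
  simp [torsionPoly, coeff_X_pow, filter_filter]

open Classical in
theorem torsionPoly_range {W : Type*} [Group W] [Fintype W] [DecidableEq W] {ρ : W →* Perm α}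
    (hρ : Function.Injective ρ) :
    torsionPoly p ρ.range = ∑ w : W with w ^ p = 1, X ^ (#(ρ w).support / p) := by
  symm
  refine sum_nbij ρ (fun w hw ↦ ?_) hρ.injOn (fun g hg ↦ ?_) fun _ _ ↦ rfl
  · have hw : w ^ p = 1 := by simpa using hw
    simp [← map_pow, hw]
  · obtain ⟨⟨w, rfl⟩, hw⟩ : g ∈ ρ.range ∧ g ^ p = 1 := by simpa using hg
    exact ⟨w, by simpa [← map_pow, map_eq_one_iff ρ hρ] using hw, rfl⟩

open Classical in
theorem torsionPoly_eq_sum (H : Subgroup (Perm α)) :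
    torsionPoly p H = ∑ h : H with h ^ p = 1, X ^ (#(h : Perm α).support / p) := by
  simpa using torsionPoly_range (p := p) H.subtype_injective

theorem card_support_permCongr (e : α ≃ β) (g : Perm α) :
    #(e.permCongr g).support = #g.support := by
  rw [← card_map e.toEmbedding]
  congr 1
  ext x
  simp [Equiv.permCongr_apply, e.eq_symm_apply]

open Classical in
theorem torsionPoly_map_permCongrHom (e : α ≃ β) (H : Subgroup (Perm α)) :
    torsionPoly p (H.map e.permCongrHom.toMonoidHom) = torsionPoly p H := by
  have hinj : Function.Injective (e.permCongrHom.toMonoidHom.comp H.subtype) :=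
    e.permCongrHom.injective.comp H.subtype_injective
  have hrange := MonoidHom.map_range e.permCongrHom.toMonoidHom H.subtype
  rw [H.range_subtype] at hrange
  rw [torsionPoly_eq_sum H, hrange, torsionPoly_range hinj]
  exact sum_congr rfl fun h _ ↦ by rw [← card_support_permCongr e]; rfl

theorem pow_eq_one_of_cycleType_eq_replicate {g : Perm α} {k : ℕ}
    (hg : g.cycleType = Multiset.replicate k p) : g ^ p = 1 := by
  rw [← orderOf_dvd_iff_pow_eq_one, ← lcm_cycleType, hg, Multiset.lcm_dvd]
  exact fun b hb ↦ (Multiset.eq_of_mem_replicate hb).dvd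

variable [Fact p.Prime]

theorem prime_dvd_card_support {g : Perm α} (hg : g ^ p = 1) : p ∣ #g.support := by
  rw [← g.sum_cycleType, cycleType_of_pow_prime_eq_one hg, Multiset.sum_replicate, smul_eq_mul]
  exact dvd_mul_left _ _

open Classical in
theorem torsionPoly_sumCongrHom (K : Subgroup (Perm α)) (L : Subgroup (Perm β)) :
    torsionPoly p ((K.prod L).map (sumCongrHom α β)) = torsionPoly p K * torsionPoly p L := by
  have hinj : Function.Injective ((sumCongrHom α β).comp (K.subtype.prodMap L.subtype)) :=
    sumCongrHom_injective.comp (K.subtype_injective.prodMap L.subtype_injective)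
  have hrange : (K.prod L).map (sumCongrHom α β) =
      ((sumCongrHom α β).comp (K.subtype.prodMap L.subtype)).range := by
    rw [MonoidHom.range_comp, MonoidHom.range_prodMap]
    simp
  have hsupport (g : Perm α) (h : Perm β) :
      #(sumCongrHom α β (g, h)).support = #g.support + #h.support := by
    have : (sumCongrHom α β (g, h)).support = g.support.disjSum h.support := by
      ext (x | x) <;> simp
    rw [this, card_disjSum]
  rw [hrange, torsionPoly_range hinj, torsionPoly_eq_sum K, torsionPoly_eq_sum L, sum_mul_sum,
    ← sum_product', ← filter_product]
  refine sum_congr (filter_congr fun w _ ↦ Prod.ext_iff) fun w hw ↦ ?_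
  have hw : w.1 ^ p = 1 ∧ w.2 ^ p = 1 := by simpa [Prod.ext_iff] using hw
  have hdvd : p ∣ #(w.1 : Perm α).support :=
    prime_dvd_card_support (by simpa using congrArg Subtype.val hw.1)
  rw [← pow_add, ← Nat.add_div_of_dvd_right hdvd, ← hsupport]
  rfl

end TorsionPoly

section Wreath

open RegularWreathProduct

variable {D Q : Type*} [Group D] [Group Q]

theorem right_pow (w : D ≀ᵣ Q) (j : ℕ) : (w ^ j).right = w.right ^ j :=
  map_pow (rightHom (D := D) (Q := Q)) w j

theorem pow_left_of_right_eq_one {w : D ≀ᵣ Q} (hw : w.right = 1) (j : ℕ) (x : Q) :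
    (w ^ j).left x = w.left x ^ j := by
  induction j with
  | zero => simp
  | succ j ih => simp [pow_succ, ih, right_pow, hw]

theorem pow_eq_one_iff_of_right_eq_one {w : D ≀ᵣ Q} (hw : w.right = 1) (j : ℕ) :
    w ^ j = 1 ↔ ∀ x, w.left x ^ j = 1 := by
  simp [RegularWreathProduct.ext_iff, right_pow, hw, funext_iff, pow_left_of_right_eq_one hw]

theorem pow_prime_eq_one_iff_of_right_ne_one {p : ℕ} [Fact p.Prime] (hQ : Nat.card Q = p)
    {w : D ≀ᵣ Q} (hw : w.right ≠ 1) : w ^ p = 1 ↔ (w ^ p).left 1 = 1 := by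
  refine ⟨fun h ↦ by simp [h], fun h ↦ ?_⟩
  have hright : (w ^ p).right = 1 := by simp [right_pow, ← hQ]
  -- `w ^ p` commutes with `w`, so it is trivial at `w.right * x` as soon as it is at `x`.
  have hstep (x : Q) (hx : (w ^ p).left x = 1) : (w ^ p).left (w.right * x) = 1 := by
    have hcomm := congrFun (congrArg left (pow_mul_comm' w p)) (w.right * x)
    simpa [hright, hx] using hcomm
  have hpow (j : ℕ) : (w ^ p).left (w.right ^ j) = 1 := by
    induction j with
    | zero => simpa using h
    | succ j ih => rw [pow_succ']; exact hstep _ ih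
  refine RegularWreathProduct.ext (funext fun x ↦ ?_) hright
  obtain ⟨j, rfl⟩ := Submonoid.mem_powers_iff _ _ |>.mp
    (mem_powers_of_prime_card (g' := x) hQ hw)
  exact hpow j

theorem pow_left_one_mulSingle_mul [DecidableEq Q] {p : ℕ} [Fact p.Prime] {q : Q}
    (hq : orderOf q = p) (d : D) (f : Q → D) :
    ((⟨Pi.mulSingle 1 d * f, q⟩ : D ≀ᵣ Q) ^ p).left 1 =
      d * ((⟨f, q⟩ : D ≀ᵣ Q) ^ p).left 1 := by
  have hpow (j : ℕ) (hj : 1 ≤ j) (hjp : j ≤ p) :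
      ((⟨Pi.mulSingle 1 d * f, q⟩ : D ≀ᵣ Q) ^ j).left 1 =
        d * ((⟨f, q⟩ : D ≀ᵣ Q) ^ j).left 1 := by
    induction j, hj using Nat.le_induction with
    | base => simp
    | succ j hj ih =>
      have hne : (q ^ j)⁻¹ ≠ 1 := inv_ne_one.mpr (pow_ne_one_of_lt_orderOf (by omega) (by omega))
      simp [pow_succ, ih (by omega), right_pow, Pi.mulSingle_eq_of_ne hne, mul_assoc]
  exact hpow p (Fact.out : p.Prime).one_le le_rfl

open Classical in
theorem card_eq_one_mul_card_of_equivariant {X : Type*} [Fintype X] [Fintype D] (T : D → Perm X)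
    {F : X → D} (hF : ∀ d x, F (T d x) = d * F x) :
    #{x | F x = 1} * Fintype.card D = Fintype.card X := by
  have hinv (x : X) : F ((T (F x)).symm x) = 1 :=
    mul_left_cancel (a := F x) (by rw [← hF, apply_symm_apply, mul_one])
  rw [← Fintype.card_subtype, ← Fintype.card_prod]
  exact Fintype.card_congr
    { toFun := fun a ↦ T a.2 a.1
      invFun := fun x ↦ (⟨(T (F x)).symm x, hinv x⟩, F x)
      left_inv := fun ⟨⟨x, hx⟩, d⟩ ↦ by simp [hF, hx]
      right_inv := fun x ↦ by simp }

open Classical in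
theorem card_pow_prime_eq_one_of_right_ne_one {p : ℕ} [Fact p.Prime] [Fintype D] [Fintype Q]
    [DecidableEq Q] (hQ : Nat.card Q = p) {q : Q} (hq : q ≠ 1) :
    #{f : Q → D | (⟨f, q⟩ : D ≀ᵣ Q) ^ p = 1} = Fintype.card D ^ (p - 1) := by
  have horder : orderOf q = p := orderOf_eq_prime (hQ ▸ pow_card_eq_one') hq
  have hcount := card_eq_one_mul_card_of_equivariant
    (F := fun f ↦ ((⟨f, q⟩ : D ≀ᵣ Q) ^ p).left 1) (fun d ↦ Equiv.mulLeft (Pi.mulSingle 1 d))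
    (pow_left_one_mulSingle_mul (D := D) horder)
  refine Nat.eq_of_mul_eq_mul_right (Fintype.card_pos (α := D)) ?_
  rw [pow_sub_one_mul (Fact.out : p.Prime).ne_zero, filter_congr fun f _ ↦
    pow_prime_eq_one_iff_of_right_ne_one (w := ⟨f, q⟩) hQ hq, hcount]
  simp [← hQ]

end Wreath

section WreathPoly

open RegularWreathProduct

variable {α Q : Type*} [Fintype α] [DecidableEq α] [Group Q] [Fintype Q] [DecidableEq Q]
  {p : ℕ} [Fact p.Prime] (K : Subgroup (Perm α))

theorem card_support_toPerm_of_right_eq_one (f : Q → K) :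
    #(toPerm K Q α ⟨f, 1⟩).support = ∑ x, #(f x : Perm α).support := by
  have (a : α) (x : Q) : toPerm K Q α ⟨f, 1⟩ (a, x) = ((f x : Perm α) a, x) := by
    simp [toPerm, Subgroup.smul_def]
  simp only [Perm.support, card_filter, univ_product_univ.symm, sum_product_right, this]
  simp

theorem card_support_toPerm_of_right_ne_one (f : Q → K) {q : Q} (hq : q ≠ 1) :
    #(toPerm K Q α ⟨f, q⟩).support = Fintype.card α * Fintype.card Q := by
  have : (toPerm K Q α ⟨f, q⟩).support = univ :=
    eq_univ_of_forall fun x ↦ mem_support.mpr fun h ↦ hq <| by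
      simpa [toPerm] using congrArg Prod.snd h
  rw [this, card_univ, Fintype.card_prod]

open Classical in
theorem sum_X_pow_card_support_of_right_eq_one (hQ : Nat.card Q = p) :
    ∑ f : Q → K with (⟨f, 1⟩ : K ≀ᵣ Q) ^ p = 1,
      (X : ℕ[X]) ^ (#(toPerm K Q α ⟨f, 1⟩).support / p) = torsionPoly p K ^ p := by
  have hpi : ({f | (⟨f, 1⟩ : K ≀ᵣ Q) ^ p = 1} : Finset (Q → K)) =
      Fintype.piFinset fun _ ↦ ({k | k ^ p = 1} : Finset K) := by
    ext f
    simp [pow_eq_one_iff_of_right_eq_one (w := ⟨f, 1⟩) rfl]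
  have hdvd (k : K) (hk : k ^ p = 1) : p ∣ #(k : Perm α).support :=
    prime_dvd_card_support (by simpa using congrArg Subtype.val hk)
  calc _ = ∑ f ∈ Fintype.piFinset fun _ : Q ↦ ({k | k ^ p = 1} : Finset K),
        ∏ x, (X : ℕ[X]) ^ (#(f x : Perm α).support / p) := by
        refine sum_congr hpi fun f hf ↦ ?_
        have hf (x : Q) : f x ^ p = 1 := by simpa using Fintype.mem_piFinset.mp hf x
        rw [prod_pow_eq_pow_sum, card_support_toPerm_of_right_eq_one,
          Nat.sum_div fun x _ ↦ hdvd _ (hf x)]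
    _ = torsionPoly p K ^ p := by
        rw [← prod_univ_sum _ fun _ (k : K) ↦ X ^ (#(k : Perm α).support / p),
          ← torsionPoly_eq_sum, prod_const, card_univ, ← Nat.card_eq_fintype_card, hQ]

open Classical in
theorem sum_X_pow_card_support_of_right_ne_one (hQ : Nat.card Q = p) {q : Q} (hq : q ≠ 1) :
    ∑ f : Q → K with (⟨f, q⟩ : K ≀ᵣ Q) ^ p = 1,
      (X : ℕ[X]) ^ (#(toPerm K Q α ⟨f, q⟩).support / p) =
        C (Nat.card K ^ (p - 1)) * X ^ Fintype.card α := by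
  have hp : Fintype.card Q = p := by rw [← hQ, Nat.card_eq_fintype_card]
  simp only [card_support_toPerm_of_right_ne_one K _ hq, hp,
    Nat.mul_div_cancel _ (Fact.out : p.Prime).pos, sum_const,
    card_pow_prime_eq_one_of_right_ne_one hQ hq]
  simp

open Classical in
theorem torsionPoly_toPerm_range [Nonempty α] (hQ : Nat.card Q = p) :
    torsionPoly p (toPerm K Q α).range =
      torsionPoly p K ^ p + C ((p - 1) * Nat.card K ^ (p - 1)) * X ^ Fintype.card α := by
  have : Fintype (K ≀ᵣ Q) := Fintype.ofEquiv _ (equivProd K Q).symm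
  have hp : Fintype.card Q = p := by rw [← hQ, Nat.card_eq_fintype_card]
  have hright (q : Q) : ∑ f : Q → K with (⟨f, q⟩ : K ≀ᵣ Q) ^ p = 1,
      (X : ℕ[X]) ^ (#(toPerm K Q α ⟨f, q⟩).support / p) =
        if q = 1 then torsionPoly p K ^ p else C (Nat.card K ^ (p - 1)) * X ^ Fintype.card α := by
    split_ifs with hq
    · exact hq ▸ sum_X_pow_card_support_of_right_eq_one K hQ
    · exact sum_X_pow_card_support_of_right_ne_one K hQ hq
  calc torsionPoly p (toPerm K Q α).range
    _ = ∑ q : Q, ∑ f : Q → K with (⟨f, q⟩ : K ≀ᵣ Q) ^ p = 1,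
          (X : ℕ[X]) ^ (#(toPerm K Q α ⟨f, q⟩).support / p) := by
        rw [torsionPoly_range (toPermInj K Q α), sum_filter, ← (equivProd K Q).symm.sum_comp,
          Fintype.sum_prod_type_right]
        simp only [sum_filter]
        rfl
    _ = _ := by
        simp only [hright, sum_ite, sum_const]
        simp [filter_eq', filter_ne', hp, mul_assoc]

end WreathPoly

section SylowPoly

open RegularWreathProduct

variable {p : ℕ}

/-- The polynomial `torsionPoly p P` of a Sylow `p`-subgroup `P` of the symmetric group of degree
`n`; by conjugacy it does not depend on the choice of `P`. -/
noncomputable def sylowPoly (p n : ℕ) : ℕ[X] :=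
  torsionPoly p ((default : Sylow p (Perm (Fin n))) : Subgroup (Perm (Fin n)))

open Classical in
theorem sylowPoly_of_le_one {n : ℕ} (hn : n ≤ 1) : sylowPoly p n = 1 := by
  have : Subsingleton (Fin n) := Fin.subsingleton_iff_le_one.mpr hn
  have hone : ({g | g ∈ ((default : Sylow p (Perm (Fin n))) : Subgroup (Perm (Fin n))) ∧
      g ^ p = 1} : Finset (Perm (Fin n))) = {1} := by
    ext g
    simp [Subsingleton.elim g 1, one_mem]
  rw [sylowPoly, torsionPoly, hone]
  simp

variable {α β : Type*} [Fintype α] [Fintype β] [Fact p.Prime]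

theorem card_sylow_perm (P : Sylow p (Perm α)) :
    Nat.card P = p ^ (Fintype.card α)!.factorization p := by
  rw [P.card_eq_multiplicity, Nat.card_perm, Nat.card_eq_fintype_card]

theorem exists_map_permCongrHom_sylow_eq (P : Sylow p (Perm α)) {K : Subgroup (Perm β)}
    (hαβ : Fintype.card α = Fintype.card β)
    (hK : Nat.card K = p ^ (Fintype.card β)!.factorization p) :
    ∃ e : α ≃ β, (P : Subgroup (Perm α)).map e.permCongrHom.toMonoidHom = K := by
  have e := Fintype.equivOfCardEq hαβ
  have hβ : Nat.card (Perm β) = (Fintype.card β)! := by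
    rw [Nat.card_perm, Nat.card_eq_fintype_card]
  let P' : Sylow p (Perm β) :=
    Sylow.ofCard ((P : Subgroup (Perm α)).map e.permCongrHom.toMonoidHom) <| by
      rw [Subgroup.card_map_of_injective e.permCongrHom.injective, hβ, card_sylow_perm P, hαβ]
  obtain ⟨g, hg⟩ := MulAction.exists_smul_eq (Perm β) P' (Sylow.ofCard K (hβ ▸ hK))
  refine ⟨e.trans g, ?_⟩
  have hconj : (e.trans g).permCongrHom.toMonoidHom =
      (MulAut.conj g).toMonoidHom.comp e.permCongrHom.toMonoidHom := by
    ext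
    simp [Equiv.permCongr_apply]
  rw [hconj, ← Subgroup.map_map]
  exact congrArg Sylow.toSubgroup hg

variable [DecidableEq α]

theorem torsionPoly_eq_sylowPoly {K : Subgroup (Perm α)} {n : ℕ} (hn : Fintype.card α = n)
    (hK : Nat.card K = p ^ (n !).factorization p) : torsionPoly p K = sylowPoly p n := by
  subst hn
  obtain ⟨e, rfl⟩ := exists_map_permCongrHom_sylow_eq
    (default : Sylow p (Perm (Fin (Fintype.card α)))) (Fintype.card_fin _) hK
  exact torsionPoly_map_permCongrHom e _

open Classical in
theorem card_cycleType_eq_replicate_le {H : Subgroup (Perm α)} (hH : IsPGroup p H) (k : ℕ) :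
    #{g : Perm α | g ∈ H ∧ g.cycleType = Multiset.replicate k p} ≤
      (sylowPoly p (Fintype.card α)).coeff k := by
  obtain ⟨P, hP⟩ := hH.exists_le_sylow
  rw [← torsionPoly_eq_sylowPoly rfl (card_sylow_perm P), coeff_torsionPoly]
  refine card_le_card fun g hg ↦ ?_
  obtain ⟨hgH, hgk⟩ : g ∈ H ∧ g.cycleType = Multiset.replicate k p := by simpa using hg
  have hk : k = #g.support / p := by
    simp [← g.sum_cycleType, hgk, (Fact.out : p.Prime).pos]
  simpa using ⟨⟨hP hgH, pow_eq_one_of_cycleType_eq_replicate hgk⟩, hk⟩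

theorem sylowPoly_add {a b : ℕ} (h : (a + b)!.factorization p =
      (a !).factorization p + (b !).factorization p) :
    sylowPoly p (a + b) = sylowPoly p a * sylowPoly p b := by
  let P (n : ℕ) : Subgroup (Perm (Fin n)) := (default : Sylow p (Perm (Fin n)))
  have hP (n : ℕ) : Nat.card (P n) = p ^ (n !).factorization p := by
    simpa using card_sylow_perm (default : Sylow p (Perm (Fin n)))
  have hcard : Nat.card (((P a).prod (P b)).map (sumCongrHom (Fin a) (Fin b))) =
      p ^ (a + b)!.factorization p := by
    rw [Subgroup.card_map_of_injective sumCongrHom_injective, Nat.card_congr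
      (Subgroup.prodEquiv _ _).toEquiv, Nat.card_prod, hP, hP, h, pow_add]
  rw [← torsionPoly_eq_sylowPoly (by simp) hcard, torsionPoly_sumCongrHom]
  rfl

theorem factorization_factorial_pow_mul (m n : ℕ) : (p ^ m * n)!.factorization p =
    n * (p ^ m)!.factorization p + (n !).factorization p := by
  have hp : p.Prime := Fact.out
  induction m with
  | zero => simp
  | succ m ih =>
    rw [pow_succ', mul_assoc, Nat.factorization_factorial_mul hp,
      Nat.factorization_factorial_mul hp, ih]
    ring

theorem factorization_factorial_pow_succ (m : ℕ) : (p ^ (m + 1))!.factorization p =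
    p * (p ^ m)!.factorization p + 1 := by
  have hp : p.Prime := Fact.out
  have hself : (p !).factorization p = 1 := by
    simpa using Nat.factorization_factorial_mul (n := 1) hp
  rw [pow_succ, factorization_factorial_pow_mul, hself]

theorem factorization_factorial_mul_add_of_lt {r : ℕ} (q : ℕ) (hr : r < p) :
    (p * q + r)!.factorization p = (p * q)!.factorization p := by
  simpa only [← Nat.factorization_def _ (Fact.out : p.Prime)] using
    padicValNat_factorial_mul_add q hr

theorem sylowPoly_pow_mul_add (m : ℕ) {a b : ℕ} (h : (a + b)!.factorization p =
      (a !).factorization p + (b !).factorization p) :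
    sylowPoly p (p ^ m * (a + b)) = sylowPoly p (p ^ m * a) * sylowPoly p (p ^ m * b) := by
  rw [mul_add, sylowPoly_add]
  rw [← mul_add]
  simp only [factorization_factorial_pow_mul, h]
  ring

theorem sylowPoly_pow_mul_of_lt (m : ℕ) {r : ℕ} (hr : r < p) :
    sylowPoly p (p ^ m * r) = sylowPoly p (p ^ m) ^ r := by
  induction r with
  | zero => simp [sylowPoly_of_le_one]
  | succ r ih =>
    rw [sylowPoly_pow_mul_add, ih (by omega), mul_one, pow_succ]
    simp [Nat.factorization_factorial_eq_zero_of_lt, hr, (Nat.lt_succ_self r).trans hr]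

theorem sylowPoly_pow_mul (m n : ℕ) : sylowPoly p (p ^ m * n) =
    sylowPoly p (p ^ m) ^ (n % p) * sylowPoly p (p ^ (m + 1) * (n / p)) := by
  have hlt : n % p < p := n.mod_lt (Fact.out : p.Prime).pos
  conv_lhs => rw [← Nat.div_add_mod n p]
  rw [sylowPoly_pow_mul_add, sylowPoly_pow_mul_of_lt m hlt, pow_succ, mul_assoc, mul_comm]
  rw [factorization_factorial_mul_add_of_lt _ hlt,
    Nat.factorization_factorial_eq_zero_of_lt hlt, add_zero]

theorem card_toPerm_range {Ω Q : Type*} [Finite Ω] [Nonempty Ω] [Group Q] [Finite Q]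
    (K : Subgroup (Perm Ω)) (hQ : Nat.card Q = p) {m : ℕ}
    (hK : Nat.card K = p ^ (p ^ m)!.factorization p) :
    Nat.card (toPerm K Q Ω).range = p ^ (p ^ (m + 1))!.factorization p := by
  have := Fintype.ofFinite Q
  rw [← Nat.card_congr (MonoidHom.ofInjective (toPermInj K Q Ω)).toEquiv,
    RegularWreathProduct.card, hK, hQ, factorization_factorial_pow_succ, pow_succ, pow_mul']

theorem sylowPoly_pow_succ (m : ℕ) :
    sylowPoly p (p ^ (m + 1)) = sylowPoly p (p ^ m) ^ p +
      C ((p - 1) * (p ^ (p ^ m)!.factorization p) ^ (p - 1)) * X ^ p ^ m := by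
  have hp : p.Prime := Fact.out
  have : NeZero (p ^ m) := ⟨(pow_pos hp.pos m).ne'⟩
  let K : Subgroup (Perm (Fin (p ^ m))) := (default : Sylow p (Perm (Fin (p ^ m))))
  have hK : Nat.card K = p ^ (p ^ m)!.factorization p := by
    simpa using card_sylow_perm (default : Sylow p (Perm (Fin (p ^ m))))
  have hQ : Nat.card (Multiplicative (ZMod p)) = p := by simp
  rw [← torsionPoly_eq_sylowPoly (by simp [pow_succ]) (card_toPerm_range K hQ hK),
    torsionPoly_toPerm_range K hQ, hK, Fintype.card_fin]
  rfl

end SylowPoly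

section ConjPairSum

variable {α : Type*} [Fintype α] [DecidableEq α] {p : ℕ}

theorem nat_card_centralizer_of_cycleType_eq_replicate {g : Perm α} {k : ℕ}
    (hg : g.cycleType = Multiset.replicate k p) :
    Nat.card (Subgroup.centralizer {g}) =
      p ^ k * k ! * (Fintype.card α - p * k)! := by
  rcases k.eq_zero_or_pos with rfl | hk
  · rw [nat_card_centralizer, hg]
    simp
  · rw [nat_card_centralizer, hg, Multiset.sum_replicate, Multiset.prod_replicate,
      Multiset.toFinset_replicate, if_neg hk.ne', prod_singleton, Multiset.count_replicate_self,
      smul_eq_mul, mul_comm k p]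
    ring

theorem even_of_cycleType_eq_replicate_two {g : Perm α} (hsign : sign g = 1) {k : ℕ}
    (hg : g.cycleType = Multiset.replicate k 2) : Even k := by
  by_contra hk
  have hodd : Odd (k * 2 + k) := (even_two.mul_left k).add_odd (Nat.not_even_iff_odd.mp hk)
  rw [sign_of_cycleType, hg, Multiset.sum_replicate, Multiset.card_replicate, smul_eq_mul,
    hodd.neg_one_pow] at hsign
  exact absurd hsign (by decide)

/-- An upper bound for the number of pairs `(g, x)` such that `g ≠ 1` and `x * g * x⁻¹` lie in a
fixed Sylow `p`-subgroup of the alternating group of degree `n`, `g ^ p = 1`, and `x` runs over the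
symmetric group. The index `k` is the number of `p`-cycles of `g`. -/
noncomputable def conjPairSum (p n : ℕ) : ℕ :=
  ∑ k ∈ Icc 1 (n / p), if p = 2 ∧ Odd k then 0 else
    (sylowPoly p n).coeff k ^ 2 * (p ^ k * k ! * (n - p * k)!)

variable [Fact p.Prime]

theorem exists_cycleType_eq_replicate {g : Perm α} (hg : g ^ p = 1) (hg1 : g ≠ 1) :
    ∃ k ∈ Icc 1 (Fintype.card α / p), g.cycleType = Multiset.replicate k p := by
  have hct := cycleType_of_pow_prime_eq_one hg
  refine ⟨_, mem_Icc.mpr ⟨card_cycleType_pos.mpr hg1, ?_⟩, hct⟩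
  rw [Nat.le_div_iff_mul_le (Fact.out : p.Prime).pos, ← smul_eq_mul, ← Multiset.sum_replicate,
    ← hct, sum_cycleType]
  exact card_le_univ _

open Classical in
theorem two_mul_card_conj_mem_le [Nontrivial α] (P : Sylow p (alternatingGroup α))
    {g : alternatingGroup α} {k : ℕ} (hg : (g : Perm α).cycleType = Multiset.replicate k p) :
    2 * #{x : alternatingGroup α | x * g * x⁻¹ ∈ P} ≤ (sylowPoly p (Fintype.card α)).coeff k *
      (p ^ k * k ! * (Fintype.card α - p * k)!) := by
  refine (two_mul_card_conj_mem P g).trans <| (card_conj_mem_le _ _).trans ?_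
  rw [nat_card_centralizer_of_cycleType_eq_replicate hg]
  refine Nat.mul_le_mul_right _ ?_
  simp_rw [isConj_iff_cycleType_eq, hg, eq_comm (a := Multiset.replicate k p)]
  exact card_cycleType_eq_replicate_le (P.isPGroup'.map _) k

open Classical in
theorem two_mul_pred_mul_card_meetingSet_le [Nontrivial α] (P : Sylow p (alternatingGroup α)) :
    2 * ((p - 1) * #(meetingSet (P : Subgroup (alternatingGroup α)))) ≤
      conjPairSum p (Fintype.card α) := by
  have hclass (g : alternatingGroup α) (hg : g ∈ P ∧ g ^ p = 1 ∧ g ≠ 1) :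
      ∃ k ∈ Icc 1 (Fintype.card α / p), (g : Perm α).cycleType = Multiset.replicate k p :=
    exists_cycleType_eq_replicate (by simpa using congrArg Subtype.val hg.2.1)
      (by simpa using hg.2.2)
  have hcard (k : ℕ) : #{g : alternatingGroup α | g ∈ P ∧ (g : Perm α).cycleType =
      Multiset.replicate k p} ≤ (sylowPoly p (Fintype.card α)).coeff k := by
    refine le_trans ?_ (card_cycleType_eq_replicate_le
      (P.isPGroup'.map (alternatingGroup α).subtype) k)
    rw [← card_map (Function.Embedding.subtype _)]
    refine card_le_card fun g hg ↦ ?_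
    obtain ⟨a, ⟨haP, hak⟩, rfl⟩ := by simpa only [mem_map, mem_filter_univ] using hg
    exact mem_filter_univ _ |>.mpr ⟨Subgroup.mem_map_of_mem _ haP, hak⟩
  choose! κ hκ hct using hclass
  calc 2 * ((p - 1) * #(meetingSet (P : Subgroup (alternatingGroup α))))
      ≤ 2 * ∑ g : alternatingGroup α with g ∈ P ∧ g ^ p = 1 ∧ g ≠ 1,
          #{x : alternatingGroup α | x * g * x⁻¹ ∈ P} :=
        Nat.mul_le_mul_left 2 (pred_mul_card_meetingSet_le P.isPGroup')
    _ = ∑ k ∈ Icc 1 (Fintype.card α / p), ∑ g : alternatingGroup α with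
          (g ∈ P ∧ g ^ p = 1 ∧ g ≠ 1) ∧ κ g = k,
          2 * #{x : alternatingGroup α | x * g * x⁻¹ ∈ P} := by
        rw [mul_sum, ← sum_fiberwise_of_maps_to fun g hg ↦ hκ g (by simpa using hg)]
        simp only [filter_filter]
    _ ≤ conjPairSum p (Fintype.card α) := sum_le_sum fun k _ ↦ ?_
  have hctk {g : alternatingGroup α} (hg : (g ∈ P ∧ g ^ p = 1 ∧ g ≠ 1) ∧ κ g = k) :
      (g : Perm α).cycleType = Multiset.replicate k p := hg.2 ▸ hct g hg.1
  split_ifs with hk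
  · refine (sum_eq_zero fun g hg ↦ absurd ?_ (Nat.not_even_iff_odd.mpr hk.2)).le
    exact even_of_cycleType_eq_replicate_two (mem_alternatingGroup.mp g.2)
      (hk.1 ▸ hctk (mem_filter.mp hg).2)
  · refine (sum_le_card_nsmul _ _ _ fun g hg ↦
      two_mul_card_conj_mem_le P (hctk (mem_filter.mp hg).2)).trans ?_
    rw [smul_eq_mul, sq, mul_assoc (coeff _ _)]
    refine Nat.mul_le_mul_right _ (le_trans (card_le_card fun g hg ↦ ?_) (hcard k))
    have hg := (mem_filter.mp hg).2
    exact mem_filter_univ _ |>.mpr ⟨hg.1.1, hctk hg⟩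

end ConjPairSum

section DegreeEight

open RegularWreathProduct

variable {α β γ : Type*}

/-- The permutations that permute the fibers of `f`, that is, preserve the equivalence relation
`f i = f j`. -/
def fiberStabilizer (f : α → β) : Subgroup (Perm α) where
  carrier := {h | ∀ i j, f (h i) = f (h j) ↔ f i = f j}
  one_mem' := fun _ _ ↦ Iff.rfl
  mul_mem' := fun hg hh i j ↦ (hg _ _).trans (hh i j)
  inv_mem' := fun {h} hh i j ↦ by simpa using (hh (h⁻¹ i) (h⁻¹ j)).symm

theorem mem_fiberStabilizer {f : α → β} {h : Perm α} :
    h ∈ fiberStabilizer f ↔ ∀ i j, f (h i) = f (h j) ↔ f i = f j :=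
  Iff.rfl

theorem fiberStabilizer_congr {f : α → β} {g : α → γ} (hfg : ∀ i j, f i = f j ↔ g i = g j) :
    fiberStabilizer f = fiberStabilizer g :=
  Subgroup.ext fun h ↦ by simp only [mem_fiberStabilizer, hfg]

theorem permCongr_mem_fiberStabilizer {e : α ≃ γ} {f : γ → β} {h : Perm α} :
    e.permCongr h ∈ fiberStabilizer f ↔ h ∈ fiberStabilizer (f ∘ e) := by
  simp [mem_fiberStabilizer, e.symm.forall_congr_left, Equiv.permCongr_apply]

theorem apply_eq_self_of_fiber_eq_pair {f : α → β} {h : Perm α} (hh : h ∈ fiberStabilizer f)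
    {a b : α} (hab : a ≠ b) (hb : h b = b) (hf : ∀ i, f i = f b ↔ i = a ∨ i = b) : h a = a := by
  have hfa : f (h a) = f b := by
    rw [← hb, hh, hf]
    exact .inl rfl
  refine ((hf _).mp hfa).resolve_right fun h' ↦ hab (h.injective (h'.trans hb.symm))

variable {Q : Type*} [Group Q] (K : Subgroup (Perm α))

theorem toPerm_range_le_fiberStabilizer_snd : (toPerm K Q α).range ≤ fiberStabilizer Prod.snd := by
  rintro _ ⟨w, rfl⟩ i j
  simp [toPerm]

theorem toPerm_range_le_fiberStabilizer_map {f : α → β} (hK : K ≤ fiberStabilizer f) :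
    (toPerm K Q α).range ≤ fiberStabilizer (Prod.map f id) := by
  rintro _ ⟨w, rfl⟩ ⟨a, x⟩ ⟨b, y⟩
  have hfiber (x : Q) : f ((w.left x : Perm α) a) = f ((w.left x : Perm α) b) ↔ f a = f b :=
    hK (w.left x).2 a b
  simp only [toPerm, Prod.map, Prod.mk.injEq]
  constructor <;> rintro ⟨h₁, h₂⟩
  · obtain rfl : x = y := by simpa using h₂
    simpa [Subgroup.smul_def, hfiber] using h₁
  · obtain rfl : x = y := h₂
    simpa [Subgroup.smul_def, hfiber] using h₁

/-- A Sylow `2`-subgroup of the symmetric group of degree 8. -/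
def blockGroup : Subgroup (Perm (Fin 8)) :=
  fiberStabilizer (fun i ↦ i.val / 2) ⊓ fiberStabilizer (fun i ↦ i.val / 4)

/-- The numbering `((a, b), c) ↦ a + 2 * b + 4 * c`. -/
def binaryEquiv : (Fin 2 × Multiplicative (ZMod 2)) × Multiplicative (ZMod 2) ≃ Fin 8 :=
  ((prodComm _ _).trans finProdFinEquiv).prodCongr (Equiv.refl _) |>.trans <|
    (prodComm _ _).trans (finProdFinEquiv (m := 2) (n := 4))

theorem exists_map_permCongrHom_sylow_le_blockGroup [Fintype α] (hα : Fintype.card α = 8)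
    (P : Sylow 2 (Perm α)) :
    ∃ e : α ≃ Fin 8, (P : Subgroup (Perm α)).map e.permCongrHom.toMonoidHom ≤ blockGroup := by
  let K := (toPerm (⊤ : Subgroup (Perm (Fin 2))) (Multiplicative (ZMod 2)) (Fin 2)).range
  let L := (toPerm K (Multiplicative (ZMod 2)) (Fin 2 × Multiplicative (ZMod 2))).range
  have hQ : Nat.card (Multiplicative (ZMod 2)) = 2 := by simp
  have hcard : Nat.card L = 2 ^ (2 ^ (2 + 1))!.factorization 2 := by
    refine card_toPerm_range _ hQ (card_toPerm_range (m := 1) _ hQ ?_)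
    simp [Fintype.card_perm, Nat.prime_two.factorization_self]
  obtain ⟨e, he⟩ := exists_map_permCongrHom_sylow_eq P (by simpa using hα) hcard
  refine ⟨e.trans binaryEquiv, Subgroup.map_le_iff_le_comap.mpr fun h hh ↦ ?_⟩
  have hL : e.permCongr h ∈ L := he ▸ Subgroup.mem_map_of_mem _ hh
  have hmem {β : Type} {f : Fin 8 → ℕ}
      {g : (Fin 2 × Multiplicative (ZMod 2)) × Multiplicative (ZMod 2) → β}
      (hg : e.permCongr h ∈ fiberStabilizer g)
      (hfg : ∀ i j, f (binaryEquiv i) = f (binaryEquiv j) ↔ g i = g j) :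
      binaryEquiv.permCongr (e.permCongr h) ∈ fiberStabilizer f :=
    permCongr_mem_fiberStabilizer.mpr <| (fiberStabilizer_congr hfg).ge hg
  exact ⟨hmem (toPerm_range_le_fiberStabilizer_map K (toPerm_range_le_fiberStabilizer_snd _) hL)
    (by decide), hmem (toPerm_range_le_fiberStabilizer_snd K hL) (by decide)⟩

/-- A permutation taking `blockGroup` to a conjugate meeting it only in `1` and `swap 0 1`. -/
def blockMixer : Perm (Fin 8) :=
  swap 3 4 * swap 4 6

theorem eq_one_of_mem_blockGroup {h : Perm (Fin 8)} (hsign : sign h = 1) (hh : h ∈ blockGroup)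
    (hconj : blockMixer * h * blockMixer⁻¹ ∈ blockGroup) : h = 1 := by
  obtain ⟨hpair, hquad⟩ := hh
  have hpair' : h ∈ fiberStabilizer fun i ↦ (blockMixer i).val / 2 :=
    permCongr_mem_fiberStabilizer (e := blockMixer).mp hconj.1
  have hquad' : h ∈ fiberStabilizer fun i ↦ (blockMixer i).val / 4 :=
    permCongr_mem_fiberStabilizer (e := blockMixer).mp hconj.2
  have h01 : h 0 = 0 ∧ h 1 = 1 ∨ h 0 = 1 ∧ h 1 = 0 := by
    have hmem : ∀ a b : Fin 8, a.val / 2 = b.val / 2 →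
      (blockMixer a).val / 2 = (blockMixer b).val / 2 → a ≠ b →
        a = 0 ∧ b = 1 ∨ a = 1 ∧ b = 0 := by decide
    exact hmem _ _ ((hpair 0 1).mpr rfl) ((hpair' 0 1).mpr rfl) (h.injective.ne (by decide))
  have h2 : h 2 = 2 := by
    have hmem : ∀ a b c : Fin 8, a = 0 ∧ b = 1 ∨ a = 1 ∧ b = 0 → c.val / 4 = a.val / 4 →
      (blockMixer c).val / 4 = (blockMixer a).val / 4 → c ≠ a → c ≠ b → c = 2 := by decide
    exact hmem _ _ _ h01 ((hquad 2 0).mpr rfl) ((hquad' 2 0).mpr rfl) (h.injective.ne (by decide))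
      (h.injective.ne (by decide))
  have h3 : h 3 = 3 := apply_eq_self_of_fiber_eq_pair hpair (by decide) h2 (by decide)
  have h6 : h 6 = 6 := apply_eq_self_of_fiber_eq_pair hpair' (by decide) h2 (by decide)
  have h5 : h 5 = 5 := apply_eq_self_of_fiber_eq_pair hpair' (by decide) h3 (by decide)
  have h7 : h 7 = 7 := apply_eq_self_of_fiber_eq_pair hpair (by decide) h6 (by decide)
  have h4 : h 4 = 4 := apply_eq_self_of_fiber_eq_pair hpair (by decide) h5 (by decide)
  have hswap : h = 1 ∨ h = swap 0 1 := by
    refine h01.imp ?_ ?_ <;> rintro ⟨h0, h1⟩ <;> ext i <;> fin_cases i <;>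
      simp [h0, h1, h2, h3, h4, h5, h6, h7, swap_apply_def]
  refine hswap.resolve_right fun h' ↦ ?_
  rw [h', sign_swap (by decide)] at hsign
  exact absurd hsign (by decide)

theorem card_meetingSet_le_of_card_eq_eight [Fintype α] [DecidableEq α] (hα : Fintype.card α = 8)
    (P : Sylow 2 (alternatingGroup α)) :
    #(meetingSet (P : Subgroup (alternatingGroup α))) ≤ 16064 := by
  have : Nontrivial α := Fintype.one_lt_card_iff_nontrivial.mp (by omega)
  have hG : Fintype.card (alternatingGroup α) = 20160 := by
    have := two_mul_card_alternatingGroup (α := α)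
    rw [Fintype.card_perm, hα, show 8 ! = 2 * 20160 from rfl] at this
    omega
  have hP : Nat.card P = 64 := by
    rw [P.card_eq_multiplicity, Nat.card_eq_fintype_card, hG]
    decide +kernel
  obtain ⟨R, hR⟩ := (P.isPGroup'.map (alternatingGroup α).subtype).exists_le_sylow
  obtain ⟨e, he⟩ := exists_map_permCongrHom_sylow_le_blockGroup hα R
  have hmem (g : alternatingGroup α) (hg : g ∈ P) : e.permCongrHom g ∈ blockGroup :=
    he (Subgroup.mem_map_of_mem _ (hR (Subgroup.mem_map_of_mem _ hg)))
  have hsign (g : Perm α) : sign (e.permCongrHom g) = sign g := sign_permCongr e g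
  obtain ⟨y, hy⟩ := e.permCongrHom.surjective blockMixer
  have hy1 : sign y = 1 := by
    rw [← hsign, hy]
    decide
  have hx : ⟨y, hy1⟩ ∉ meetingSet (P : Subgroup (alternatingGroup α)) :=
    notMem_meetingSet.mpr fun g hg hconj ↦ by
      have hone : e.permCongrHom g = 1 :=
        eq_one_of_mem_blockGroup ((hsign g).trans (mem_alternatingGroup.mp g.2)) (hmem g hg)
          (by simpa only [Subgroup.coe_mul, Subgroup.coe_inv, map_mul, map_inv, hy]
            using hmem _ hconj)
      exact Subtype.ext ((map_eq_one_iff _ e.permCongrHom.injective).mp hone)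
  have := card_meetingSet_add_card_sq_le hx
  rw [hP, hG] at this
  omega

end DegreeEight

section Evaluation

theorem coeff_eq_eval_div_pow_mod {P : ℕ[X]} {Y : ℕ} (hY : P.eval 1 < Y) (k : ℕ) :
    P.coeff k = P.eval Y / Y ^ k % Y := by
  have heval (y : ℕ) : P.eval y = P.divX.eval y * y + P.coeff 0 := by
    conv_lhs => rw [← P.divX_mul_X_add]
    simp
  have hlt : P.coeff 0 < Y := by have := heval 1; omega
  induction k generalizing P with
  | zero => rw [pow_zero, Nat.div_one, heval, Nat.mul_add_mod_self_right, Nat.mod_eq_of_lt hlt]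
  | succ k ih =>
    have hdivX : P.divX.eval 1 < Y := by have := heval 1; omega
    have hdivX0 (y : ℕ) : P.divX.eval y = P.divX.divX.eval y * y + P.divX.coeff 0 := by
      conv_lhs => rw [← P.divX.divX_mul_X_add]
      simp
    have hdiv : P.eval Y / Y = P.divX.eval Y := by
      rw [heval, mul_comm, Nat.mul_add_div (by omega), Nat.div_eq_of_lt hlt, add_zero]
    rw [← P.coeff_divX, ih hdivX hdivX0 (by have := hdivX0 1; omega), pow_succ',
      ← Nat.div_div_eq_div_mul, hdiv]

/-- The value `f n`. Recursion on `n` makes the kernel reduce `n` to a numeral before it enters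
`f`, so that `n` is not recomputed at each of its occurrences there. -/
def withValue (n : ℕ) (f : ℕ → ℕ) : ℕ :=
  Nat.rec (f 0) (fun m _ ↦ f (m + 1)) n

@[simp]
theorem withValue_eq (n : ℕ) (f : ℕ → ℕ) : withValue n f = f n := by
  cases n <;> rfl

/-- Computes `(sylowPoly p (p ^ m * n)).eval Y` from
`u = (p ^ (p ^ m)!.factorization p) ^ (p - 1) * Y ^ p ^ m` and `v = (sylowPoly p (p ^ m)).eval Y` by
running through the base `p` digits of `n`; see `eval_sylowPoly_pow_mul`. The first explicit
argument after `p` bounds the number of recursive calls. -/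
def sylowEval (p : ℕ) : ℕ → ℕ → ℕ → ℕ → ℕ
  | 0, _, _, _ => 1
  | t + 1, u, v, n =>
    bif n.blt p then v ^ n else
      v ^ (n % p) * withValue (p ^ (p - 1) * u ^ p) fun u' ↦
        withValue (v ^ p + (p - 1) * u) fun v' ↦ withValue (n / p) fun n' ↦ sylowEval p t u' v' n'

theorem eval_sylowPoly_pow_mul {p : ℕ} [Fact p.Prime] (Y t m n : ℕ) (hn : n ≤ t) :
    (sylowPoly p (p ^ m * n)).eval Y =
      sylowEval p t ((p ^ (p ^ m)!.factorization p) ^ (p - 1) * Y ^ p ^ m)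
        ((sylowPoly p (p ^ m)).eval Y) n := by
  have hp : p.Prime := Fact.out
  induction t generalizing m n with
  | zero =>
    obtain rfl : n = 0 := by omega
    simp [sylowEval, sylowPoly_of_le_one]
  | succ t ih =>
    rw [sylowEval]
    rcases lt_or_ge n p with hlt | hge
    · rw [sylowPoly_pow_mul_of_lt m hlt, (Nat.blt_eq).mpr hlt, cond_true, eval_pow]
    · have hdiv : n / p ≤ t := by
        have := Nat.div_lt_self (hp.pos.trans_le hge) hp.one_lt
        omega
      have hblt : n.blt p = false := Bool.eq_false_iff.mpr (by simpa using hge)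
      rw [hblt, cond_false, sylowPoly_pow_mul, eval_mul, eval_pow, ih (m + 1) _ hdiv,
        sylowPoly_pow_succ, factorization_factorial_pow_succ]
      simp only [withValue_eq, eval_add, eval_mul, eval_pow, eval_C, eval_X]
      congr 2 <;> ring

theorem eval_sylowPoly {p : ℕ} [Fact p.Prime] (Y n : ℕ) :
    (sylowPoly p n).eval Y = sylowEval p n Y 1 n := by
  simpa [sylowPoly_of_le_one] using eval_sylowPoly_pow_mul (p := p) Y n 0 n le_rfl

/-- The denominator of the fixed-point approximations in `conjPairSumLoop`. These replace exact
arithmetic with factorials because the kernel is slow on numerals with many trailing zero bits. -/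
def pairScale : ℕ := 2 ^ 1100

theorem pairScale_pos : 0 < pairScale :=
  pow_pos two_pos _

/-- Bounds the terms of `pairScale * conjPairSum p n / n !` with indices `k + 1, …, k + t` from
`S = (sylowPoly p n).eval Y / Y ^ k`, `r = n - p * k` and an upper bound `W` for
`pairScale * (p ^ k * k ! * r !) / n !`; see `mul_sum_Icc_le_conjPairSumLoop`. -/
def conjPairSumLoop (p Y : ℕ) : ℕ → ℕ → ℕ → ℕ → ℕ → ℕ
  | 0, _, _, _, _ => 0
  | t + 1, k, S, r, W =>
    withValue (S / Y) fun S' ↦ withValue (W * (p * (k + 1)) / r.descFactorial p + 1) fun W' ↦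
      withValue (k + 1) fun k' ↦ withValue (r - p) fun r' ↦
        (bif p == 2 && k' % 2 == 1 then 0 else (S' % Y) ^ 2 * W') +
          conjPairSumLoop p Y t k' S' r' W'

/-- An upper bound for `pairScale * conjPairSum p n / n !`, which reads off the coefficients of
`sylowPoly p n` as digits of its value at a sufficiently large `Y`. -/
def scaledPairSum (p n : ℕ) : ℕ :=
  withValue n fun n ↦ withValue (sylowEval p n 1 1 n + 1) fun Y ↦
    withValue (sylowEval p n Y 1 n) fun S ↦ withValue pairScale fun W ↦
      conjPairSumLoop p Y (n / p) 0 S n W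

theorem mul_factorial_le_succ_div_descFactorial {p n k W a b : ℕ} (hle : p * (k + 1) ≤ n)
    (hW : a * (p ^ k * k ! * (n - p * k)!) ≤ W * b) :
    a * (p ^ (k + 1) * (k + 1)! * (n - p * (k + 1))!) ≤
      (W * (p * (k + 1)) / (n - p * k).descFactorial p + 1) * b := by
  have hpr : p ≤ n - p * k := by rw [mul_add_one] at hle; omega
  have hd : 0 < (n - p * k).descFactorial p := Nat.descFactorial_pos.mpr hpr
  have hr : n - p * (k + 1) = n - p * k - p := by rw [mul_add_one, Nat.sub_sub]
  rw [← Nat.factorial_mul_descFactorial hpr, ← hr] at hW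
  rw [Nat.factorial_succ]
  generalize (n - p * k).descFactorial p = d at *
  refine Nat.le_of_mul_le_mul_left ?_ hd
  calc d * (a * (p ^ (k + 1) * ((k + 1) * k !) * (n - p * (k + 1))!))
      = a * (p ^ k * k ! * ((n - p * (k + 1))! * d)) * (p * (k + 1)) := by ring
    _ ≤ W * b * (p * (k + 1)) := Nat.mul_le_mul_right _ hW
    _ = W * (p * (k + 1)) * b := by ring
    _ ≤ d * (W * (p * (k + 1)) / d + 1) * b :=
        Nat.mul_le_mul_right _ (Nat.lt_mul_div_succ _ hd).le
    _ = d * ((W * (p * (k + 1)) / d + 1) * b) := mul_assoc _ _ _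

theorem mul_sum_Icc_le_conjPairSumLoop {p n Y a b W : ℕ} (hY : (sylowPoly p n).eval 1 < Y)
    (t k : ℕ) (hk : k + t = n / p) (hW : a * (p ^ k * k ! * (n - p * k)!) ≤ W * b) :
    a * (∑ i ∈ Icc (k + 1) (n / p), if p = 2 ∧ Odd i then 0 else
      (sylowPoly p n).coeff i ^ 2 * (p ^ i * i ! * (n - p * i)!)) ≤
    conjPairSumLoop p Y t k ((sylowPoly p n).eval Y / Y ^ k) (n - p * k) W * b := by
  induction t generalizing k W with
  | zero => simp [Icc_eq_empty_of_lt (show n / p < k + 1 by omega)]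
  | succ t ih =>
    have hle : p * (k + 1) ≤ n :=
      (Nat.mul_le_mul_left _ (by omega)).trans (Nat.mul_div_le n p)
    have hW' := mul_factorial_le_succ_div_descFactorial hle hW
    have hr : n - p * k - p = n - p * (k + 1) := by rw [mul_add_one, Nat.sub_sub]
    rw [← sum_Ioc_add_eq_sum_Icc (by omega), ← Icc_succ_left_eq_Ioc, Order.succ_eq_add_one,
      conjPairSumLoop, add_comm, mul_add]
    simp only [withValue_eq, hr, Nat.div_div_eq_div_mul, ← pow_succ,
      ← coeff_eq_eval_div_pow_mod hY, Bool.cond_eq_ite, Bool.and_eq_true, beq_iff_eq,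
      ← Nat.odd_iff, add_mul]
    refine add_le_add ?_ (ih (k + 1) (by omega) hW')
    split_ifs
    · simp
    · rw [mul_left_comm, mul_assoc (_ ^ 2)]
      exact Nat.mul_le_mul_left _ hW'

theorem pairScale_mul_conjPairSum_le {p : ℕ} [Fact p.Prime] (n : ℕ) :
    pairScale * conjPairSum p n ≤ scaledPairSum p n * n ! := by
  simp only [scaledPairSum, withValue_eq, ← eval_sylowPoly]
  simpa [conjPairSum] using mul_sum_Icc_le_conjPairSumLoop (W := pairScale)
    (Nat.lt_succ_self ((sylowPoly p n).eval 1)) (n / p) 0 (zero_add _) (by simp)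

theorem sylowPoly_mul_div {p : ℕ} [Fact p.Prime] (n : ℕ) :
    sylowPoly p (p * (n / p)) = sylowPoly p n := by
  simpa [sylowPoly_of_le_one, eq_comm] using sylowPoly_pow_mul (p := p) 0 n

theorem factorial_add_mul_factorial_le {a b : ℕ} (hab : a ≤ b) (r : ℕ) :
    (a + r)! * b ! ≤ a ! * (b + r)! := by
  rw [← Nat.factorial_mul_ascFactorial, ← Nat.factorial_mul_ascFactorial, mul_right_comm,
    ← mul_assoc]
  exact Nat.mul_le_mul_left _ (Nat.ascFactorial_le r (by omega))

theorem conjPairSum_mul_factorial_le {p : ℕ} [Fact p.Prime] (n : ℕ) :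
    conjPairSum p n * (p * (n / p))! ≤ conjPairSum p (p * (n / p)) * n ! := by
  rw [conjPairSum, conjPairSum, sylowPoly_mul_div,
    Nat.mul_div_cancel_left _ (Fact.out : p.Prime).pos, sum_mul, sum_mul]
  refine sum_le_sum fun k hk ↦ ?_
  split_ifs
  · simp
  have hle : p * k ≤ p * (n / p) := Nat.mul_le_mul_left _ (mem_Icc.mp hk).2
  have hfac := factorial_add_mul_factorial_le (Nat.sub_le (p * (n / p)) (p * k)) (n % p)
  rw [← Nat.sub_add_comm hle, Nat.div_add_mod] at hfac
  simp only [mul_assoc]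
  gcongr

end Evaluation

section Numerics

theorem pairScale_mul_conjPairSum_le_min {p : ℕ} [Fact p.Prime] (n : ℕ) :
    pairScale * conjPairSum p n ≤
      min (scaledPairSum p n) (scaledPairSum p (p * (n / p))) * n ! := by
  rw [min_mul_of_nonneg _ _ (Nat.zero_le _)]
  refine le_min (pairScale_mul_conjPairSum_le n) ?_
  refine Nat.le_of_mul_le_mul_right ?_ (p * (n / p)).factorial_pos
  calc pairScale * conjPairSum p n * (p * (n / p))!
      ≤ pairScale * (conjPairSum p (p * (n / p)) * n !) := by
        rw [mul_assoc]
        exact Nat.mul_le_mul_left _ (conjPairSum_mul_factorial_le n)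
    _ ≤ scaledPairSum p (p * (n / p)) * (p * (n / p))! * n ! := by
        rw [← mul_assoc]
        exact Nat.mul_le_mul_right _ (pairScale_mul_conjPairSum_le _)
    _ = scaledPairSum p (p * (n / p)) * n ! * (p * (n / p))! := mul_right_comm _ _ _

/-- An upper bound for the number of `x` in the alternating group of degree `n` for which a given
`p`-subgroup meets its conjugate by `x` nontrivially. The bound by pairs of elements is too weak
for `p = 2` and `n = 8`, where `16064 = 8! / 2 - 64 ^ 2`. -/
def meetingBound (p n : ℕ) : ℕ :=
  if p = 2 ∧ n = 8 then 16064 else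
    min (scaledPairSum p n) (scaledPairSum p (p * (n / p))) * n ! / (2 * ((p - 1) * pairScale))

theorem scaledPairSum_of_lt {p n : ℕ} (h : n < p) : scaledPairSum p n = 0 := by
  simp [scaledPairSum, conjPairSumLoop, Nat.div_eq_of_lt h]

theorem meetingBound_of_lt {p n : ℕ} (h : n < p) : meetingBound p n = 0 := by
  rw [meetingBound, if_neg (by omega), scaledPairSum_of_lt h, Nat.zero_min, zero_mul, Nat.zero_div]

theorem sum_meetingBound_le_of_le_imp_mem {S T : Finset ℕ} {n : ℕ} (h : ∀ p ∈ S, p ≤ n → p ∈ T) :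
    ∑ p ∈ S, meetingBound p n ≤ ∑ p ∈ T, meetingBound p n :=
  sum_le_sum_of_ne_zero fun p hp hne ↦ h p hp <| not_lt.mp <| mt meetingBound_of_lt hne

/-- Bounds the share of the alternating group, in units of `1 / 10000`, that `meetingBound p n`
takes up for all `n` from 10 to 500. -/
def meetingWeight : ℕ → ℕ
  | 2 => 6500
  | 3 => 2800
  | 5 => 40
  | 7 => 90
  | _ => 1

/-- A set containing all primes up to 500. It is larger than necessary, so that computing with it
requires no primality tests. -/
def candidatePrimes : Finset ℕ :=
  {2, 3, 5, 7} ∪ Icc 11 500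

theorem mem_of_prime_of_lt_eleven {p : ℕ} (hp : p.Prime) (hlt : p < 11) :
    p ∈ ({2, 3, 5, 7} : Finset ℕ) := by
  interval_cases p <;> first | decide | exact absurd hp (by norm_num)

theorem mem_candidatePrimes {p : ℕ} (hp : p.Prime) (hle : p ≤ 500) : p ∈ candidatePrimes := by
  rcases lt_or_ge p 11 with hlt | hge
  · exact mem_union_left _ (mem_of_prime_of_lt_eleven hp hlt)
  · exact mem_union_right _ (mem_Icc.mpr ⟨hge, hle⟩)

set_option maxRecDepth 100000 in
theorem sum_meetingWeight_lt : ∑ p ∈ candidatePrimes, meetingWeight p < 10000 := by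
  decide +kernel

set_option maxRecDepth 100000 in
theorem mul_scaledPairSum_le : ∀ p ∈ candidatePrimes, ∀ j ∈ Icc (10 / p) (500 / p),
    10000 * scaledPairSum p (p * j) ≤ meetingWeight p * ((p - 1) * pairScale) := by
  decide +kernel

set_option maxRecDepth 100000 in
theorem two_mul_sum_meetingBound_lt_of_mem_Icc :
    ∀ n ∈ Icc 5 9, 2 * ∑ p ∈ {2, 3, 5, 7}, meetingBound p n < n ! := by
  decide +kernel

theorem mul_meetingBound_le {p n : ℕ} (hp : p ∈ candidatePrimes) (hn : n ∈ Icc 10 500) :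
    10000 * (2 * meetingBound p n) ≤ meetingWeight p * n ! := by
  obtain ⟨h10, h500⟩ := mem_Icc.mp hn
  rw [meetingBound, if_neg (by omega)]
  have hle : 10000 * (min (scaledPairSum p n) (scaledPairSum p (p * (n / p))) * n !) ≤
      meetingWeight p * n ! * ((p - 1) * pairScale) := by
    rw [← mul_assoc, mul_right_comm (meetingWeight p)]
    refine Nat.mul_le_mul_right _ <| (Nat.mul_le_mul_left _ (min_le_right _ _)).trans <|
      mul_scaledPairSum_le p hp _ <| mem_Icc.mpr ⟨?_, ?_⟩ <;>
    exact Nat.div_le_div_right ‹_›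
  generalize min (scaledPairSum p n) _ * n ! = s at *
  generalize (p - 1) * pairScale = d at *
  calc 10000 * (2 * (s / (2 * d))) ≤ 10000 * (s / d) := by
        rw [mul_comm 2 d, ← Nat.div_div_eq_div_mul]
        exact Nat.mul_le_mul_left _ (Nat.mul_div_le _ _)
    _ ≤ 10000 * s / d := Nat.mul_div_le_mul_div_assoc _ _ _
    _ ≤ meetingWeight p * n ! := Nat.div_le_of_le_mul (by rwa [mul_comm d])

theorem two_mul_sum_meetingBound_lt {S : Finset ℕ} (hS : ∀ p ∈ S, p.Prime) {n : ℕ} (h5 : 5 ≤ n)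
    (h500 : n ≤ 500) : 2 * ∑ p ∈ S, meetingBound p n < n ! := by
  rcases lt_or_ge n 10 with hlt | h10
  · calc 2 * ∑ p ∈ S, meetingBound p n ≤ 2 * ∑ p ∈ {2, 3, 5, 7}, meetingBound p n :=
          Nat.mul_le_mul_left 2 <| sum_meetingBound_le_of_le_imp_mem fun p hp hpn ↦
            mem_of_prime_of_lt_eleven (hS p hp) (by omega)
      _ < n ! := two_mul_sum_meetingBound_lt_of_mem_Icc n (mem_Icc.mpr ⟨h5, by omega⟩)
  · refine Nat.lt_of_mul_lt_mul_left (a := 10000) ?_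
    calc 10000 * (2 * ∑ p ∈ S, meetingBound p n)
        ≤ 10000 * (2 * ∑ p ∈ candidatePrimes, meetingBound p n) := by
          gcongr 10000 * (2 * ?_)
          exact sum_meetingBound_le_of_le_imp_mem fun p hp hpn ↦
            mem_candidatePrimes (hS p hp) (hpn.trans h500)
      _ = ∑ p ∈ candidatePrimes, 10000 * (2 * meetingBound p n) := by simp only [mul_sum]
      _ ≤ ∑ p ∈ candidatePrimes, meetingWeight p * n ! :=
          sum_le_sum fun p hp ↦ mul_meetingBound_le hp (mem_Icc.mpr ⟨h10, h500⟩)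
      _ < 10000 * n ! := by
          rw [← sum_mul]
          exact Nat.mul_lt_mul_of_pos_right sum_meetingWeight_lt n.factorial_pos

end Numerics

theorem card_meetingSet_le_meetingBound {α : Type*} [Fintype α] [DecidableEq α] [Nontrivial α]
    {p : ℕ} [Fact p.Prime] {H : Subgroup (alternatingGroup α)} (hH : IsPGroup p H) :
    #(meetingSet H) ≤ meetingBound p (Fintype.card α) := by
  obtain ⟨P, hP⟩ := hH.exists_le_sylow
  refine (card_le_card (meetingSet_mono hP)).trans ?_
  rw [meetingBound]
  split_ifs with h
  · obtain ⟨rfl, h8⟩ := h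
    exact card_meetingSet_le_of_card_eq_eight h8 P
  · have hpos : 0 < (p - 1) * pairScale :=
      Nat.mul_pos (Nat.sub_pos_of_lt (Fact.out : p.Prime).one_lt) pairScale_pos
    rw [Nat.le_div_iff_mul_le (Nat.mul_pos two_pos hpos)]
    calc _ = pairScale * (2 * ((p - 1) * #(meetingSet (P : Subgroup (alternatingGroup α))))) := by
          ring
      _ ≤ pairScale * conjPairSum p (Fintype.card α) :=
          Nat.mul_le_mul_left _ (two_mul_pred_mul_card_meetingSet_le P)
      _ ≤ _ := pairScale_mul_conjPairSum_le_min _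

end LisiSabatini

open LisiSabatini in
theorem stmt19_general {α : Type*} [Fintype α] [DecidableEq α] (h5 : 5 ≤ Fintype.card α)
    (h500 : Fintype.card α ≤ 500) {S : Finset ℕ} (hS : ∀ p ∈ S, p.Prime)
    (H : S → Subgroup (alternatingGroup α)) (hH : ∀ p : S, IsPGroup p (H p)) :
    ∃ x : alternatingGroup α, ∀ p : S, H p ⊓ (H p).map (MulAut.conj x⁻¹).toMonoidHom = ⊥ := by
  have : Nontrivial α := Fintype.one_lt_card_iff_nontrivial.mp (by omega)
  have hcard := two_mul_card_alternatingGroup (α := α)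
  rw [Fintype.card_perm] at hcard
  refine exists_forall_inf_map_conj_eq_bot H ?_
  have hle (p : S) : (meetingSet (H p)).card ≤ meetingBound p (Fintype.card α) :=
    have : Fact (p : ℕ).Prime := ⟨hS p p.2⟩
    card_meetingSet_le_meetingBound (hH p)
  calc ∑ p, (meetingSet (H p)).card ≤ ∑ p : S, meetingBound p (Fintype.card α) :=
        Finset.sum_le_sum fun p _ ↦ hle p
    _ = ∑ p ∈ S, meetingBound p (Fintype.card α) :=
        Finset.sum_coe_sort S fun p ↦ meetingBound p (Fintype.card α)
    _ < Fintype.card (alternatingGroup α) := by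
        have := two_mul_sum_meetingBound_lt hS h5 h500
        omega

/-- The Lisi–Sabatini conjecture for alternating groups `Aₙ` with `5 ≤ n ≤ 500`:
for every choice of one Sylow `p`-subgroup `H p` of `G = Aₙ` for each prime divisor
`p` of `|G|`, there is an `x ∈ G` with `H p ⊓ (H p)^x = 1` for all such `p`. -/
theorem stmt19 (n : ℕ) (h5 : 5 ≤ n) (h500 : n ≤ 500)
    (H : (p : ℕ) → p ∈ (Nat.card (alternatingGroup (Fin n))).primeFactors →
      Sylow p (alternatingGroup (Fin n))) :
    ∃ x : alternatingGroup (Fin n),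
      ∀ (p : ℕ) (hp : p ∈ (Nat.card (alternatingGroup (Fin n))).primeFactors),
        (H p hp : Subgroup (alternatingGroup (Fin n))) ⊓
          Subgroup.map (MulAut.conj x⁻¹).toMonoidHom
            (H p hp : Subgroup (alternatingGroup (Fin n))) = ⊥ := by
  obtain ⟨x, hx⟩ := stmt19_general (α := Fin n) (by simpa using h5) (by simpa using h500)
    (fun _ ↦ Nat.prime_of_mem_primeFactors) (fun p ↦ H p p.2) fun p ↦ (H p p.2).isPGroup'
  exact ⟨x, fun p hp ↦ hx ⟨p, hp⟩⟩
end
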